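/- There exists a deterministic online bin-packing algorithm A such that for every finite input sequence I of symmetric L-shapes (those with ℓx = ℓy and wx = wy), the number of bins used by A on I is at most 41·OPT(I) + 9. -/

import Mathlib

/-!
Write an item as `(ℓ, w)`, put `d = 1 - ℓ`, and let `m = OPT`. The algorithm separates the items into
four types and never mixes types in a bin; it uses at most `38 m + 4` bins in total. Two items fit
together whenever the second is placed further up the diagonal by at least the width of the first
(`disjoint_diag`), so inside a bin, items placed on the diagonal behave like disjoint intervals.

* Degenerate items (`w = 0`) have empty interior and all go to one bin.

* Wide items (`ℓ > 1/2`, `d < 3w`). Each one reserves the interval `[min d w, 2w)` and is placed on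
  the diagonal at `min d w`; items with disjoint intervals are compatible. At most `6m` of these
  intervals share a point (`wide_card`), because long items in one bin have vertical arms crossing
  the line `y = 1/2`, which bounds their total width. The Kierstead–Trotter online colouring of
  intervals with clique number `ω` uses `3ω` colours (`ktLev_le`, `ktCol_spec`, `kt_disjoint`), so
  `18m` bins suffice.

* Narrow items (`ℓ > 1/2`, `3w ≤ d`), classified by the power of three below `d`. Each bin has one
  slot on the diagonal per class, and the slots of different classes are disjoint. The total width of
  a class is at most `4·3⁻ᶻ·m` (`class_sum`), and each slot but the last takes `3⁻ᶻ/3` of it, so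
  `12m + 1` bins suffice.

* Small items (`ℓ ≤ 1/2`), classified by the power of two above `2ℓ`. Items of a class are nested in
  dyadic square cells of side `2⁻ᵏ`, and a new cell is always the first free one in the Z-order
  numbering. With this leftmost rule the free space in the touched bins is bounded
  (`touched_bound`), and an area count (`area_sum`, `level_card`, `small_area`) gives `8m + 2` bins.
-/

/-- An L-shape, given by its four parameters: arm lengths `lx, ly` and widths `wx, wy`. -/
structure LShape where
  lx : ℝ
  wx : ℝ
  ly : ℝ
  wy : ℝ

/-- The parameter constraints of an L-shape: `0 ≤ wx ≤ lx ≤ 1` and `0 ≤ wy ≤ ly ≤ 1`. -/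
def LShape.IsValid (L : LShape) : Prop :=
  0 ≤ L.wx ∧ L.wx ≤ L.lx ∧ L.lx ≤ 1 ∧ 0 ≤ L.wy ∧ L.wy ≤ L.ly ∧ L.ly ≤ 1

/-- The point set `([0,lx]×[0,wy]) ∪ ([0,wx]×[0,ly])` of an L-shape (reference point at the
origin). -/
def LShape.toSet (L : LShape) : Set (ℝ × ℝ) :=
  Set.Icc ((0, 0) : ℝ × ℝ) (L.lx, L.wy) ∪ Set.Icc ((0, 0) : ℝ × ℝ) (L.wx, L.ly)

/-- Translate a set in the plane by a vector. -/
def planeTranslate (v : ℝ × ℝ) (S : Set (ℝ × ℝ)) : Set (ℝ × ℝ) := (· + v) '' S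

/-- The unit bin `[0,1]²`. -/
def unitBin : Set (ℝ × ℝ) := Set.Icc ((0, 0) : ℝ × ℝ) (1, 1)

/-- The online decision (bin index, translation vector) made by algorithm `A` for the `i`-th
item of the list `l`: it depends only on the first `i+1` items. -/
def placeOf (A : List LShape → ℕ × ℝ × ℝ) (l : List LShape) (i : Fin l.length) : ℕ × ℝ × ℝ :=
  A (l.take (i.1 + 1))

/-- The placements produced by `A` on input `l` form valid bin packings: each translate lies
in the unit bin, and items in the same bin have pairwise disjoint interiors. -/
def OnlinePacks (A : List LShape → ℕ × ℝ × ℝ) (l : List LShape) : Prop :=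
  (∀ i : Fin l.length, planeTranslate (placeOf A l i).2 (l.get i).toSet ⊆ unitBin) ∧
  ∀ i j : Fin l.length, i ≠ j → (placeOf A l i).1 = (placeOf A l j).1 →
    Disjoint (interior (planeTranslate (placeOf A l i).2 (l.get i).toSet))
             (interior (planeTranslate (placeOf A l j).2 (l.get j).toSet))

/-- The number of distinct bins used by `A` on input `l`. -/
def binsUsed (A : List LShape → ℕ × ℝ × ℝ) (l : List LShape) : ℕ :=
  ((Finset.univ : Finset (Fin l.length)).image fun i => (placeOf A l i).1).card

/-- The items of `l` can be packed offline into `m` unit bins. -/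
def OffPacks (l : List LShape) (m : ℕ) : Prop :=
  ∃ (bin : Fin l.length → ℕ) (v : Fin l.length → ℝ × ℝ),
    (∀ i, bin i < m) ∧
    (∀ i, planeTranslate (v i) (l.get i).toSet ⊆ unitBin) ∧
    ∀ i j, i ≠ j → bin i = bin j →
      Disjoint (interior (planeTranslate (v i) (l.get i).toSet))
               (interior (planeTranslate (v j) (l.get j).toSet))

/-- The offline optimum: the minimum number of unit bins into which `l` can be packed. -/
noncomputable def OPT (l : List LShape) : ℕ := sInf {m | OffPacks l m}

/-! ### Online recursion -/

/-- The sequence of decisions `d 0, d 1, …` of an online rule `F`: the decision `d i` is `F i prev`,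
where `prev` lists the decisions taken before time `i` (and is constant from `i` on). -/
def online {β : Type} [Inhabited β] (F : ℕ → (ℕ → β) → β) (i : ℕ) : β :=
  F i (fun j => if _h : j < i then online F j else default)
termination_by i

lemma online_congr {β : Type} [Inhabited β] (F G : ℕ → (ℕ → β) → β) (i : ℕ)
    (h : ∀ j ≤ i, ∀ prev, F j prev = G j prev) : online F i = online G i := by
  induction i using Nat.strong_induction_on with
  | _ i ih =>
    rw [online, online, h i le_rfl]
    congr 1
    funext j
    split_ifs with hj
    · exact ih j hj (fun k hk => h k (by omega))
    · rfl

/-! ### Online colouring of intervals -/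

open Classical in
/-- One step of the Kierstead–Trotter rule for colouring the intervals `[a i, b i)` online; a colour
is a pair (level, shade). The level is the least `k` such that the intervals of level at
most `k`, together with the new one, cover no point of the new one more than `k` times; the shade is
the least one not used by an overlapping interval of the same level. -/
noncomputable def ktStep (a b : ℕ → ℝ) (i : ℕ) (prev : ℕ → ℕ × ℕ) : ℕ × ℕ :=
  (sInf {k | ∀ p, a i ≤ p → p < b i →
      ((Finset.range i).filter (fun j => (prev j).1 ≤ k ∧ a j ≤ p ∧ p < b j)).card + 1 ≤ k},
   sInf {c | ∀ j < i, (prev j).1 = sInf {k | ∀ p, a i ≤ p → p < b i →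
      ((Finset.range i).filter (fun j => (prev j).1 ≤ k ∧ a j ≤ p ∧ p < b j)).card + 1 ≤ k} →
      a j < b j → a j < b i → a i < b j → (prev j).2 ≠ c})

/-- The level given to the `i`-th interval by the Kierstead–Trotter rule. -/
noncomputable def ktLev (a b : ℕ → ℝ) (i : ℕ) : ℕ := (online (ktStep a b) i).1

/-- The shade given to the `i`-th interval by the Kierstead–Trotter rule. -/
noncomputable def ktCol (a b : ℕ → ℝ) (i : ℕ) : ℕ := (online (ktStep a b) i).2

open Classical in
/-- The levels `k` admissible for the `i`-th interval. -/
def ktSet (a b : ℕ → ℝ) (i : ℕ) : Set ℕ :=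
  {k | ∀ p, a i ≤ p → p < b i →
      ((Finset.range i).filter (fun j => ktLev a b j ≤ k ∧ a j ≤ p ∧ p < b j)).card + 1 ≤ k}

lemma ktLev_eq (a b : ℕ → ℝ) (i : ℕ) : ktLev a b i = sInf (ktSet a b i) := by
  classical
  rw [ktLev, online, ktStep, ktSet]
  dsimp only
  congr 1
  ext k
  simp only [Set.mem_ofPred_eq]
  refine forall_congr' fun p => forall_congr' fun _ => forall_congr' fun _ => ?_
  have : (Finset.range i).filter (fun j => ((fun j => if _h : j < i then
      online (ktStep a b) j else default) j).1 ≤ k ∧ a j ≤ p ∧ p < b j)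
      = (Finset.range i).filter (fun j => ktLev a b j ≤ k ∧ a j ≤ p ∧ p < b j) := by
    apply Finset.filter_congr
    intro j hj
    have hj' : j < i := Finset.mem_range.mp hj
    simp [hj', ktLev]
  rw [← this]

lemma ktCol_eq (a b : ℕ → ℝ) (i : ℕ) : ktCol a b i =
    sInf {c | ∀ j < i, ktLev a b j = ktLev a b i →
      a j < b j → a j < b i → a i < b j → ktCol a b j ≠ c} := by
  classical
  have h1 : ktLev a b i = (ktStep a b i (fun j => if _h : j < i then
      online (ktStep a b) j else default)).1 := by rw [ktLev, online]
  rw [ktCol, online, ktStep]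
  dsimp only
  congr 1
  ext c
  simp only [Set.mem_ofPred_eq]
  refine forall_congr' fun j => forall_congr' fun hj => ?_
  rw [h1, ktStep]
  simp only [hj, dif_pos, ktLev, ktCol]

lemma ktLev_mem (a b : ℕ → ℝ) (i : ℕ) : ktLev a b i ∈ ktSet a b i := by
  classical
  rw [ktLev_eq]
  apply Nat.sInf_mem
  refine ⟨i + 1, fun p _ _ => ?_⟩
  have := Finset.card_filter_le (Finset.range i)
    (fun j => ktLev a b j ≤ i + 1 ∧ a j ≤ p ∧ p < b j)
  simp only [Finset.card_range] at this
  omega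

open Classical in
/-- A witness for the level `k` of an interval: one of its points that was already covered `k - 1`
times by intervals of lower level. -/
lemma kt_witness (a b : ℕ → ℝ) (i : ℕ) (hi : a i < b i) :
    ∃ p, a i ≤ p ∧ p < b i ∧ 1 ≤ ktLev a b i ∧ ktLev a b i ≤
      ((Finset.range i).filter (fun j => ktLev a b j < ktLev a b i ∧ a j ≤ p ∧ p < b j)).card + 1 := by
  have h1 : 1 ≤ ktLev a b i := by
    have := ktLev_mem a b i (a i) le_rfl hi
    omega
  have h2 : ktLev a b i - 1 ∉ ktSet a b i := by
    apply Nat.notMem_of_lt_sInf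
    rw [← ktLev_eq]; omega
  simp only [ktSet, Set.mem_ofPred_eq, not_forall] at h2
  obtain ⟨p, hp1, hp2, hp3⟩ := h2
  refine ⟨p, hp1, hp2, h1, ?_⟩
  have : (Finset.range i).filter (fun j => ktLev a b j ≤ ktLev a b i - 1 ∧ a j ≤ p ∧ p < b j)
      = (Finset.range i).filter (fun j => ktLev a b j < ktLev a b i ∧ a j ≤ p ∧ p < b j) := by
    apply Finset.filter_congr
    intro j _
    constructor
    · rintro ⟨h, h'⟩; exact ⟨by omega, h'⟩
    · rintro ⟨h, h'⟩; exact ⟨by omega, h'⟩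
  rw [this] at hp3
  omega

/-- Every interval has a private point: one contained in no other interval of the same level. -/
lemma kt_private (a b : ℕ → ℝ) (i : ℕ) (hi : a i < b i) :
    ∃ p, a i ≤ p ∧ p < b i ∧ ∀ j, j ≠ i → ktLev a b j = ktLev a b i → ¬ (a j ≤ p ∧ p < b j) := by
  classical
  obtain ⟨p, hp1, hp2, h1, hp3⟩ := kt_witness a b i hi
  refine ⟨p, hp1, hp2, fun j hji hl hj => ?_⟩
  rcases lt_or_gt_of_ne hji with h | h
  · have hm := ktLev_mem a b i p hp1 hp2
    have hsub : insert j ((Finset.range i).filter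
        (fun j => ktLev a b j < ktLev a b i ∧ a j ≤ p ∧ p < b j)) ⊆
        (Finset.range i).filter (fun j => ktLev a b j ≤ ktLev a b i ∧ a j ≤ p ∧ p < b j) := by
      intro x hx
      simp only [Finset.mem_insert, Finset.mem_filter, Finset.mem_range] at hx ⊢
      rcases hx with rfl | hx
      · exact ⟨h, hl.le, hj⟩
      · exact ⟨hx.1, hx.2.1.le, hx.2.2⟩
    have hc := Finset.card_le_card hsub
    rw [Finset.card_insert_of_notMem (by simp [hl])] at hc
    omega
  · have hm := ktLev_mem a b j p hj.1 hj.2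
    rw [hl] at hm
    have hsub : insert i ((Finset.range i).filter
        (fun j => ktLev a b j < ktLev a b i ∧ a j ≤ p ∧ p < b j)) ⊆
        (Finset.range j).filter (fun j => ktLev a b j ≤ ktLev a b i ∧ a j ≤ p ∧ p < b j) := by
      intro x hx
      simp only [Finset.mem_insert, Finset.mem_filter, Finset.mem_range] at hx ⊢
      rcases hx with rfl | hx
      · exact ⟨h, le_rfl, hp1, hp2⟩
      · exact ⟨by omega, hx.2.1.le, hx.2.2⟩
    have hc := Finset.card_le_card hsub
    rw [Finset.card_insert_of_notMem (by simp)] at hc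
    omega

/-- By privacy of the witnesses, an interval overlaps at most one interval of its level on either
side, so three shades suffice. -/
lemma ktCol_spec (a b : ℕ → ℝ) (i : ℕ) :
    ktCol a b i < 3 ∧ ∀ j < i, ktLev a b j = ktLev a b i →
      a j < b j → a j < b i → a i < b j → ktCol a b j ≠ ktCol a b i := by
  classical
  have key : ∃ c < 3, ∀ j < i, ktLev a b j = ktLev a b i →
      a j < b j → a j < b i → a i < b j → ktCol a b j ≠ c := by
    by_contra hcon
    push Not at hcon
    -- each blocking interval extends beyond the new one on the left or on the right
    have side : ∀ c < 3, ∃ j < i, ktCol a b j = c ∧ ktLev a b j = ktLev a b i ∧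
        a j < b i ∧ a i < b j ∧ ∃ p, a j ≤ p ∧ p < b j ∧ (p < a i ∨ b i ≤ p) ∧
        ∀ j', j' ≠ j → ktLev a b j' = ktLev a b j → ¬ (a j' ≤ p ∧ p < b j') := by
      intro c hc
      obtain ⟨j, hj, hl, hne, h1, h2, hcc⟩ := hcon c hc
      obtain ⟨p, hp1, hp2, hp3⟩ := kt_private a b j hne
      refine ⟨j, hj, hcc, hl, h1, h2, p, hp1, hp2, ?_, hp3⟩
      have := hp3 i (by omega) hl.symm
      by_contra h
      push Not at h
      exact this h
    -- two blocking intervals cannot lie on the same side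
    have pair : ∀ j j' p p', j ≠ j' → ktLev a b j = ktLev a b i → ktLev a b j' = ktLev a b i →
        a j < b i → a i < b j → a j' < b i → a i < b j' →
        a j ≤ p → p < b j → a j' ≤ p' → p' < b j' →
        (∀ j', j' ≠ j → ktLev a b j' = ktLev a b j → ¬ (a j' ≤ p ∧ p < b j')) →
        (∀ j, j ≠ j' → ktLev a b j = ktLev a b j' → ¬ (a j ≤ p' ∧ p' < b j)) →
        ¬ (p < a i ∧ p' < a i) ∧ ¬ (b i ≤ p ∧ b i ≤ p') := by
      intro j j' p p' hne hl hl' h1 h2 h3 h4 h5 h6 h7 h8 hp hp'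
      have e1 := hp j' hne.symm (hl'.trans hl.symm)
      have e2 := hp' j hne (hl.trans hl'.symm)
      constructor
      · rintro ⟨g1, g2⟩
        rcases le_total p p' with h | h
        · exact e2 ⟨by linarith, by linarith⟩
        · exact e1 ⟨by linarith, by linarith⟩
      · rintro ⟨g1, g2⟩
        rcases le_total p p' with h | h
        · exact e1 ⟨by linarith, by linarith⟩
        · exact e2 ⟨by linarith, by linarith⟩
    obtain ⟨j0, _, c0, l0, x0, y0, p0, u0, v0, s0, q0⟩ := side 0 (by norm_num)
    obtain ⟨j1, _, c1, l1, x1, y1, p1, u1, v1, s1, q1⟩ := side 1 (by norm_num)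
    obtain ⟨j2, _, c2, l2, x2, y2, p2, u2, v2, s2, q2⟩ := side 2 (by norm_num)
    have n01 : j0 ≠ j1 := by rintro rfl; omega
    have n02 : j0 ≠ j2 := by rintro rfl; omega
    have n12 : j1 ≠ j2 := by rintro rfl; omega
    have r01 := pair j0 j1 p0 p1 n01 l0 l1 x0 y0 x1 y1 u0 v0 u1 v1 q0 q1
    have r02 := pair j0 j2 p0 p2 n02 l0 l2 x0 y0 x2 y2 u0 v0 u2 v2 q0 q2
    have r12 := pair j1 j2 p1 p2 n12 l1 l2 x1 y1 x2 y2 u1 v1 u2 v2 q1 q2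
    rcases s0 with s0 | s0 <;> rcases s1 with s1 | s1 <;> rcases s2 with s2 | s2
    · exact r01.1 ⟨s0, s1⟩
    · exact r01.1 ⟨s0, s1⟩
    · exact r02.1 ⟨s0, s2⟩
    · exact r12.2 ⟨s1, s2⟩
    · exact r12.1 ⟨s1, s2⟩
    · exact r02.2 ⟨s0, s2⟩
    · exact r01.2 ⟨s0, s1⟩
    · exact r01.2 ⟨s0, s1⟩
  obtain ⟨c, hc, hc'⟩ := key
  rw [ktCol_eq]
  constructor
  · exact lt_of_le_of_lt (Nat.sInf_le hc') hc
  · exact Nat.sInf_mem (s := {c | ∀ j < i, ktLev a b j = ktLev a b i →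
      a j < b j → a j < b i → a i < b j → ktCol a b j ≠ c}) ⟨c, hc'⟩

open Classical in
lemma ktLev_le (a b : ℕ → ℝ) (N ω : ℕ)
    (hω : ∀ p, ((Finset.range N).filter (fun j => a j ≤ p ∧ p < b j)).card ≤ ω)
    (i : ℕ) (hiN : i < N) (hi : a i < b i) : 1 ≤ ktLev a b i ∧ ktLev a b i ≤ ω := by
  obtain ⟨p, hp1, hp2, h1, hp3⟩ := kt_witness a b i hi
  refine ⟨h1, hp3.trans (le_trans ?_ (hω p))⟩
  have hsub : insert i ((Finset.range i).filter
      (fun j => ktLev a b j < ktLev a b i ∧ a j ≤ p ∧ p < b j)) ⊆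
      (Finset.range N).filter (fun j => a j ≤ p ∧ p < b j) := by
    intro x hx
    simp only [Finset.mem_insert, Finset.mem_filter, Finset.mem_range] at hx ⊢
    rcases hx with rfl | hx
    · exact ⟨hiN, hp1, hp2⟩
    · exact ⟨by omega, hx.2.2⟩
  have hc := Finset.card_le_card hsub
  rwa [Finset.card_insert_of_notMem (by simp)] at hc

lemma kt_disjoint (a b : ℕ → ℝ) (i j : ℕ) (hij : i ≠ j) (hi : a i < b i) (hj : a j < b j)
    (hl : ktLev a b i = ktLev a b j) (hc : ktCol a b i = ktCol a b j) :
    b i ≤ a j ∨ b j ≤ a i := by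
  by_contra h
  push Not at h
  rcases lt_or_gt_of_ne hij with h' | h'
  · exact (ktCol_spec a b j).2 i h' hl hi h.2 h.1 hc
  · exact (ktCol_spec a b i).2 j h' hl.symm hj h.1 h.2 hc.symm

lemma kt_congr (a b a' b' : ℕ → ℝ) (i : ℕ) (ha : ∀ j ≤ i, a j = a' j) (hb : ∀ j ≤ i, b j = b' j) :
    ktLev a b i = ktLev a' b' i ∧ ktCol a b i = ktCol a' b' i := by
  classical
  have : online (ktStep a b) i = online (ktStep a' b') i := by
    apply online_congr
    intro j hj prev
    have h0 : ∀ k p, (Finset.range j).filter (fun j => (prev j).1 ≤ k ∧ a j ≤ p ∧ p < b j) =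
        (Finset.range j).filter (fun j => (prev j).1 ≤ k ∧ a' j ≤ p ∧ p < b' j) := by
      intro k p
      apply Finset.filter_congr
      intro x hx
      have hx' : x < j := Finset.mem_range.mp hx
      rw [ha x (by omega), hb x (by omega)]
    have h1 : ∀ c, (∀ x < j, (prev x).1 = sInf {k | ∀ p, a j ≤ p → p < b j →
      ((Finset.range j).filter (fun j => (prev j).1 ≤ k ∧ a j ≤ p ∧ p < b j)).card + 1 ≤ k} →
      a x < b x → a x < b j → a j < b x → (prev x).2 ≠ c) ↔
      (∀ x < j, (prev x).1 = sInf {k | ∀ p, a' j ≤ p → p < b' j →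
      ((Finset.range j).filter (fun j => (prev j).1 ≤ k ∧ a' j ≤ p ∧ p < b' j)).card + 1 ≤ k} →
      a' x < b' x → a' x < b' j → a' j < b' x → (prev x).2 ≠ c) := by
      intro c
      refine forall_congr' fun x => forall_congr' fun hx => ?_
      simp only [h0]
      rw [ha x (by omega), hb x (by omega), ha j hj, hb j hj]
    simp only [ktStep, h1]
    simp only [h0]
    rw [ha j hj, hb j hj]
  simp [ktLev, ktCol, this]

/-! ### Online allocation of dyadic cells -/

/-- Cells are indexed by pairs (level, number), ordered along a Z-curve: the four children of the
cell `n` of level `k` are the cells `4n, …, 4n+3` of level `k+1`. `CellSub k n k' n'` says that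
cell `n'` of level `k'` is contained in cell `n` of level `k`. -/
def CellSub (k n k' n' : ℕ) : Prop := k ≤ k' ∧ n' / 4 ^ (k' - k) = n

/-- Two cells are nested, in one order or the other. -/
def CellComp (k n k' n' : ℕ) : Prop := CellSub k n k' n' ∨ CellSub k' n' k n

open Classical in
/-- One step of the allocation: a key `(k, q)` asks for a cell of level `k`. A repeated key gets the
cell given to its first occurrence; a new key gets the cell with the least number that is not nested
with an allocated one. -/
noncomputable def allocStep (κ : ℕ → Option (ℕ × ℕ)) (i : ℕ) (prev : ℕ → ℕ) : ℕ :=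
  if sInf {j | κ j = κ i} < i then prev (sInf {j | κ j = κ i}) else
    sInf {n | ∀ j < i, ∀ K Q K' Q', κ i = some (K, Q) → κ j = some (K', Q') →
      ¬ CellComp K n K' (prev j)}

/-- The number of the cell allocated to the key `κ i`. -/
noncomputable def alloc (κ : ℕ → Option (ℕ × ℕ)) (i : ℕ) : ℕ := online (allocStep κ) i

lemma alloc_eq (κ : ℕ → Option (ℕ × ℕ)) (i : ℕ) : alloc κ i =
    if sInf {j | κ j = κ i} < i then alloc κ (sInf {j | κ j = κ i}) else
    sInf {n | ∀ j < i, ∀ K Q K' Q', κ i = some (K, Q) → κ j = some (K', Q') →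
      ¬ CellComp K n K' (alloc κ j)} := by
  rw [alloc, online, allocStep]
  split_ifs with h
  · rfl
  · congr 1
    ext n
    simp only [Set.mem_ofPred_eq]
    refine forall_congr' fun j => forall_congr' fun hj => ?_
    simp only [hj, dif_pos, alloc]

lemma alloc_congr (κ κ' : ℕ → Option (ℕ × ℕ)) (i : ℕ) (h : ∀ j ≤ i, κ j = κ' j) :
    alloc κ i = alloc κ' i := by
  apply online_congr
  intro j hj prev
  have hle : ∀ κ : ℕ → Option (ℕ × ℕ), sInf {x | κ x = κ j} ≤ j := fun κ => Nat.sInf_le rfl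
  have hmem : ∀ κ : ℕ → Option (ℕ × ℕ), κ (sInf {x | κ x = κ j}) = κ j :=
    fun κ => Nat.sInf_mem (s := {x | κ x = κ j}) ⟨j, rfl⟩
  have e : sInf {x | κ x = κ j} = sInf {x | κ' x = κ' j} := by
    apply le_antisymm
    · apply Nat.sInf_le
      have h1 := hle κ'
      have h2 := hmem κ'
      show κ _ = κ j
      rw [h _ (by omega), h _ hj, h2]
    · apply Nat.sInf_le
      have h1 := hle κ
      have h2 := hmem κ
      show κ' _ = κ' j
      rw [← h _ (by omega), ← h _ hj, h2]
  have e2 : ∀ n, (∀ x < j, ∀ K Q K' Q', κ j = some (K, Q) → κ x = some (K', Q') →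
      ¬ CellComp K n K' (prev x)) ↔ (∀ x < j, ∀ K Q K' Q', κ' j = some (K, Q) →
      κ' x = some (K', Q') → ¬ CellComp K n K' (prev x)) := by
    intro n
    refine forall_congr' fun x => forall_congr' fun hx => ?_
    rw [h x (by omega), h j hj]
  simp only [allocStep, e2, e]

lemma alloc_first (κ : ℕ → Option (ℕ × ℕ)) (i : ℕ) :
    alloc κ i = alloc κ (sInf {j | κ j = κ i}) := by
  have hle : sInf {x | κ x = κ i} ≤ i := Nat.sInf_le rfl
  rcases hle.lt_or_eq with h | h
  · rw [alloc_eq, if_pos h]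
  · rw [h]

lemma alloc_key (κ : ℕ → Option (ℕ × ℕ)) (i j : ℕ) (h : κ i = κ j) : alloc κ i = alloc κ j := by
  rw [alloc_first κ i, alloc_first κ j, h]

lemma cellSub_bin {k n k' n' : ℕ} (h : CellSub k n k' n') : n / 4 ^ k = n' / 4 ^ k' := by
  obtain ⟨h1, rfl⟩ := h
  rw [Nat.div_div_eq_div_mul, ← pow_add]
  congr 2; omega

lemma cellComp_bin {k n k' n' : ℕ} (h : CellComp k n k' n') : n / 4 ^ k = n' / 4 ^ k' := by
  rcases h with h | h
  · exact cellSub_bin h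
  · exact (cellSub_bin h).symm

lemma alloc_set_nonempty (κ : ℕ → Option (ℕ × ℕ)) (i : ℕ) :
    {n | ∀ j < i, ∀ K Q K' Q', κ i = some (K, Q) → κ j = some (K', Q') →
      ¬ CellComp K n K' (alloc κ j)}.Nonempty := by
  rcases hκ : κ i with _ | ⟨K, Q⟩
  · exact ⟨0, by simp⟩
  -- any cell of level `K` in a bin beyond all bins used so far
  refine ⟨(1 + ∑ j ∈ Finset.range i, alloc κ j) * 4 ^ K, ?_⟩
  intro j hj K1 Q1 K' Q' h1 h2 hc
  simp only [Option.some.injEq, Prod.mk.injEq] at h1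
  obtain ⟨rfl, rfl⟩ := h1
  have := cellComp_bin hc
  rw [Nat.mul_div_cancel _ (by positivity)] at this
  have h3 : alloc κ j / 4 ^ K' ≤ alloc κ j := Nat.div_le_self _ _
  have h4 : alloc κ j ≤ ∑ j ∈ Finset.range i, alloc κ j :=
    Finset.single_le_sum (f := fun j => alloc κ j) (fun _ _ => Nat.zero_le _)
      (Finset.mem_range.mpr hj)
  omega

lemma alloc_new (κ : ℕ → Option (ℕ × ℕ)) (i K Q : ℕ) (hi : κ i = some (K, Q))
    (hnew : ∀ j < i, κ j ≠ κ i) :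
    (∀ j < i, ∀ K' Q', κ j = some (K', Q') → ¬ CellComp K (alloc κ i) K' (alloc κ j)) ∧
    ∀ n < alloc κ i, ∃ j < i, ∃ K' Q', κ j = some (K', Q') ∧ CellComp K n K' (alloc κ j) := by
  have hf : ¬ sInf {j | κ j = κ i} < i := fun h =>
    hnew _ h (Nat.sInf_mem (s := {x | κ x = κ i}) ⟨i, rfl⟩)
  have e := alloc_eq κ i
  rw [if_neg hf] at e
  constructor
  · intro j hj K' Q' hj'
    have := Nat.sInf_mem (alloc_set_nonempty κ i)
    rw [← e] at this
    exact this j hj K Q K' Q' hi hj'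
  · intro n hn
    rw [e] at hn
    have := Nat.notMem_of_lt_sInf hn
    simp only [Set.mem_ofPred_eq, not_forall, not_not] at this
    obtain ⟨j, hj, K1, Q1, K', Q', h1, h2, h3⟩ := this
    rw [hi] at h1
    simp only [Option.some.injEq, Prod.mk.injEq] at h1
    obtain ⟨rfl, rfl⟩ := h1
    exact ⟨j, hj, K', Q', h2, h3⟩

lemma exists_first (κ : ℕ → Option (ℕ × ℕ)) (i : ℕ) :
    ∃ i' ≤ i, κ i' = κ i ∧ (∀ j < i', κ j ≠ κ i') ∧ alloc κ i' = alloc κ i := by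
  refine ⟨sInf {j | κ j = κ i}, Nat.sInf_le rfl, ?_, ?_, (alloc_first κ i).symm⟩
  · exact Nat.sInf_mem (s := {x | κ x = κ i}) ⟨i, rfl⟩
  · intro j hj h
    have h0 : κ (sInf {x | κ x = κ i}) = κ i := Nat.sInf_mem (s := {x | κ x = κ i}) ⟨i, rfl⟩
    exact Nat.notMem_of_lt_sInf hj (h.trans h0)

lemma cellComp_symm {k n k' n' : ℕ} (h : CellComp k n k' n') : CellComp k' n' k n := h.symm

/-- Distinct keys get non-nested cells. -/
lemma alloc_not_comp (κ : ℕ → Option (ℕ × ℕ)) (i j K Q K' Q' : ℕ) (hi : κ i = some (K, Q))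
    (hj : κ j = some (K', Q')) (hne : κ i ≠ κ j) : ¬ CellComp K (alloc κ i) K' (alloc κ j) := by
  obtain ⟨i', -, ki, fi, ai⟩ := exists_first κ i
  obtain ⟨j', -, kj, fj, aj⟩ := exists_first κ j
  rw [← ai, ← aj]
  have hne' : i' ≠ j' := by rintro rfl; exact hne (ki.symm.trans kj)
  rcases lt_or_gt_of_ne hne' with h | h
  · exact fun hc => (alloc_new κ j' K' Q' (kj.trans hj) fj).1 i' h K Q (ki.trans hi)
      (cellComp_symm hc)
  · exact (alloc_new κ i' K Q (ki.trans hi) fi).1 j' h K' Q' (kj.trans hj)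

/-- Cells are allocated leftmost: each cell before an allocated one of the same level is nested with
an allocated cell. -/
lemma alloc_leftmost (κ : ℕ → Option (ℕ × ℕ)) (i K Q : ℕ) (hi : κ i = some (K, Q))
    (n : ℕ) (hn : n < alloc κ i) :
    ∃ j ≤ i, ∃ K' Q', κ j = some (K', Q') ∧ CellComp K n K' (alloc κ j) := by
  obtain ⟨i', hle, ki, fi, ai⟩ := exists_first κ i
  rw [← ai] at hn
  obtain ⟨j, hj, h⟩ := (alloc_new κ i' K Q (ki.trans hi) fi).2 n hn
  exact ⟨j, by omega, h⟩

/-- The numbers of the cells of level `j` that contain a cell of `C`. -/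
def touched (C : Finset (ℕ × ℕ)) (j : ℕ) : Finset ℕ :=
  (C.filter (fun c => j ≤ c.1)).image (fun c => c.2 / 4 ^ (c.1 - j))

/-- Call a cell of level `j` split if it properly contains a cell of `C`. By leftmost allocation all
untouched children of split cells lie in a single split cell. -/
lemma touched_step (C : Finset (ℕ × ℕ))
    (H1 : ∀ c ∈ C, ∀ c' ∈ C, c ≠ c' → ¬ CellComp c.1 c.2 c'.1 c'.2)
    (H2 : ∀ c ∈ C, ∀ n < c.2, ∃ c' ∈ C, CellComp c.1 n c'.1 c'.2) (j : ℕ) :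
    4 * ((touched C (j + 1)).image (· / 4)).card ≤ (touched C (j + 1)).card + 4 := by
  classical
  set G := touched C (j + 1) with hG
  set F := G.image (· / 4) with hF
  set D := F.biUnion (fun P => Finset.Ico (4 * P) (4 * P + 4)) with hD
  have hDmem : ∀ m, m ∈ D ↔ m / 4 ∈ F := by
    intro m
    simp only [hD, Finset.mem_biUnion, Finset.mem_Ico]
    constructor
    · rintro ⟨P, hP, h1, h2⟩
      have : m / 4 = P := by omega
      rwa [this]
    · intro h
      exact ⟨m / 4, h, by omega, by omega⟩
  have hDcard : D.card = 4 * F.card := by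
    rw [hD, Finset.card_biUnion]
    · simp [mul_comm]
    · intro P _ P' _ hne
      rw [Function.onFun, Finset.disjoint_left]
      intro m hm hm'
      simp only [Finset.mem_Ico] at hm hm'
      omega
  have hfree : ∀ m ∈ D, m ∉ G → ∀ m' ∈ D, m' ∉ G → m / 4 < m' / 4 → False := by
    intro m hm hmG m' hm' hmG' hlt
    -- the parent of `m'` contains an allocated cell, which `m` should have accommodated
    rw [hDmem] at hm hm'
    obtain ⟨g', hg', e'⟩ := Finset.mem_image.mp hm'
    obtain ⟨c, hc, ec⟩ := Finset.mem_image.mp hg'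
    obtain ⟨g, hg, e⟩ := Finset.mem_image.mp hm
    obtain ⟨b, hb, eb⟩ := Finset.mem_image.mp hg
    rw [Finset.mem_filter] at hc hb
    have hltc : m * 4 ^ (c.1 - (j + 1)) < c.2 := by
      have h1 : m < c.2 / 4 ^ (c.1 - (j + 1)) := by rw [ec]; omega
      have h2 := Nat.div_mul_le_self c.2 (4 ^ (c.1 - (j + 1)))
      have h3 : 0 < 4 ^ (c.1 - (j + 1)) := by positivity
      nlinarith
    obtain ⟨d, hd, hcomp⟩ := H2 c hc.1 _ hltc
    -- `d` is nested with the first descendant of `m` of the level of `c`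
    have hdG : ¬ (j + 1 ≤ d.1 ∧ d.2 / 4 ^ (d.1 - (j + 1)) = m) := by
      rintro ⟨h1, h2⟩
      exact hmG (Finset.mem_image.mpr ⟨d, Finset.mem_filter.mpr ⟨hd, h1⟩, h2⟩)
    have hpar : d.1 ≤ j ∧ m / 4 ^ (j + 1 - d.1) = d.2 := by
      rcases hcomp with ⟨h1, h2⟩ | ⟨h1, h2⟩
      · exfalso
        apply hdG
        refine ⟨by omega, ?_⟩
        have : d.1 - (j + 1) = (d.1 - c.1) + (c.1 - (j + 1)) := by omega
        rw [this, pow_add, ← Nat.div_div_eq_div_mul, h2, Nat.mul_div_cancel _ (by positivity)]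
      · by_cases hdj : j + 1 ≤ d.1
        · exfalso
          apply hdG
          refine ⟨hdj, ?_⟩
          rw [← h2, Nat.div_div_eq_div_mul, ← pow_add]
          have : c.1 - d.1 + (d.1 - (j + 1)) = c.1 - (j + 1) := by omega
          rw [this, Nat.mul_div_cancel _ (by positivity)]
        · refine ⟨by omega, ?_⟩
          have : c.1 - d.1 = (c.1 - (j + 1)) + (j + 1 - d.1) := by omega
          rw [this, pow_add, ← Nat.div_div_eq_div_mul, Nat.mul_div_cancel _ (by positivity)] at h2
          exact h2
    -- then `d` contains `b`, an allocated cell in the parent of `m`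
    have hdb : CellSub d.1 d.2 b.1 b.2 := by
      refine ⟨by omega, ?_⟩
      have h1 : b.1 - d.1 = (b.1 - (j + 1)) + (1 + (j - d.1)) := by omega
      have h2 : j + 1 - d.1 = 1 + (j - d.1) := by omega
      rw [h1, pow_add, ← Nat.div_div_eq_div_mul, eb, pow_add, ← Nat.div_div_eq_div_mul,
        pow_one, e, ← hpar.2, h2, pow_add, pow_one, ← Nat.div_div_eq_div_mul]
    have hne : d ≠ b := by
      intro h
      have := congrArg Prod.fst h
      omega
    exact H1 d hd b hb.1 hne (Or.inl hdb)
  have hfc : (D \ G).card ≤ 4 := by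
    rcases (D \ G).eq_empty_or_nonempty with h | ⟨m, hm⟩
    · simp [h]
    · have hs : D \ G ⊆ Finset.Ico (4 * (m / 4)) (4 * (m / 4) + 4) := by
        intro m' hm'
        rw [Finset.mem_sdiff] at hm hm'
        have h1 := hfree m hm.1 hm.2 m' hm'.1 hm'.2
        have h2 := hfree m' hm'.1 hm'.2 m hm.1 hm.2
        rw [Finset.mem_Ico]
        have h3 : m / 4 = m' / 4 := by
          rcases lt_trichotomy (m / 4) (m' / 4) with h | h | h
          · exact (h1 h).elim
          · exact h
          · exact (h2 h).elim
        omega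
      have := Finset.card_le_card hs
      simpa using this
  have h5 : D ⊆ G ∪ (D \ G) := by
    intro x hx
    by_cases hxG : x ∈ G <;> simp [hx, hxG]
  have h6 := (Finset.card_le_card h5).trans (Finset.card_union_le _ _)
  omega

lemma touched_succ (C : Finset (ℕ × ℕ)) (j : ℕ) : (touched C j).card ≤
    (C.filter (fun c => c.1 = j)).card + ((touched C (j + 1)).image (· / 4)).card := by
  classical
  have hs : touched C j ⊆ (C.filter (fun c => c.1 = j)).image Prod.snd ∪
      (touched C (j + 1)).image (· / 4) := by
    intro m hm
    obtain ⟨c, hc, e⟩ := Finset.mem_image.mp hm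
    rw [Finset.mem_filter] at hc
    rw [Finset.mem_union]
    rcases hc.2.eq_or_lt with h | h
    · left
      exact Finset.mem_image.mpr ⟨c, Finset.mem_filter.mpr ⟨hc.1, h.symm⟩, by simpa [h] using e⟩
    · right
      refine Finset.mem_image.mpr ⟨c.2 / 4 ^ (c.1 - (j + 1)), Finset.mem_image.mpr
        ⟨c, Finset.mem_filter.mpr ⟨hc.1, h⟩, rfl⟩, ?_⟩
      rw [Nat.div_div_eq_div_mul, ← pow_succ, ← e]
      congr 2; omega
  refine (Finset.card_le_card hs).trans ((Finset.card_union_le _ _).trans ?_)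
  gcongr
  exact Finset.card_image_le

/-- The number of bins touched exceeds the total area of the allocated cells by at most `4/3`: the
waste at level `j` is at most one cell of that level. -/
lemma touched_bound (C : Finset (ℕ × ℕ))
    (H1 : ∀ c ∈ C, ∀ c' ∈ C, c ≠ c' → ¬ CellComp c.1 c.2 c'.1 c'.2)
    (H2 : ∀ c ∈ C, ∀ n < c.2, ∃ c' ∈ C, CellComp c.1 n c'.1 c'.2)
    (M : ℕ) (hM : ∀ c ∈ C, c.1 < M) :
    ((touched C 0).card : ℝ) ≤
      ∑ j ∈ Finset.range M, ((C.filter (fun c => c.1 = j)).card : ℝ) * (1 / 4) ^ j + 4 / 3 := by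
  have key : ∀ r ≤ M, ((touched C (M - r)).card : ℝ) * (1 / 4) ^ (M - r) ≤
      ∑ j ∈ Finset.Ico (M - r) M, ((C.filter (fun c => c.1 = j)).card : ℝ) * (1 / 4) ^ j
        + 4 / 3 * (1 / 4) ^ (M - r) := by
    intro r
    induction r with
    | zero =>
      intro _
      have : touched C M = ∅ := by
        rw [touched, Finset.image_eq_empty, Finset.filter_eq_empty_iff]
        intro c hc
        have := hM c hc
        omega
      simp only [Nat.sub_zero, this, Finset.card_empty, Finset.Ico_self, Finset.sum_empty]
      simp
    | succ r ih =>
      intro hr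
      obtain ⟨j, hj⟩ : ∃ j, M - (r + 1) = j := ⟨_, rfl⟩
      have hj1 : M - r = j + 1 := by omega
      have ih := ih (by omega)
      rw [hj1] at ih
      rw [hj, Finset.sum_eq_sum_Ico_succ_bot (by omega)]
      have a1 := touched_succ C j
      have a2 := touched_step C H1 H2 j
      have a3 : ((touched C j).card : ℝ) ≤ (C.filter (fun c => c.1 = j)).card +
          (((touched C (j + 1)).card : ℝ) + 4) / 4 := by
        have a1' : ((touched C j).card : ℝ) ≤ (C.filter (fun c => c.1 = j)).card +
          ((touched C (j + 1)).image (· / 4)).card := by exact_mod_cast a1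
        have a2' : 4 * (((touched C (j + 1)).image (· / 4)).card : ℝ) ≤
          (touched C (j + 1)).card + 4 := by exact_mod_cast a2
        linarith
      have hp : (0 : ℝ) < (1 / 4) ^ j := by positivity
      have a4 := mul_le_mul_of_nonneg_right a3 hp.le
      rw [pow_succ] at ih
      linarith
  have := key M le_rfl
  rwa [Nat.sub_self, pow_zero, mul_one, mul_one, ← Finset.range_eq_Ico] at this

/-! ### Geometry of translated L-shapes -/

/-- A valid L-shape with equal arm lengths and equal widths. -/
def SymL (L : LShape) : Prop := L.IsValid ∧ L.lx = L.ly ∧ L.wx = L.wy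

lemma SymL.w_nonneg {L : LShape} (h : SymL L) : 0 ≤ L.wx := h.1.1
lemma SymL.w_le {L : LShape} (h : SymL L) : L.wx ≤ L.lx := h.1.2.1
lemma SymL.l_le {L : LShape} (h : SymL L) : L.lx ≤ 1 := h.1.2.2.1

lemma SymL.mem {L : LShape} (h : SymL L) (v p : ℝ × ℝ) :
    p ∈ planeTranslate v L.toSet ↔
      (v.1 ≤ p.1 ∧ p.1 ≤ v.1 + L.lx ∧ v.2 ≤ p.2 ∧ p.2 ≤ v.2 + L.wx) ∨
      (v.1 ≤ p.1 ∧ p.1 ≤ v.1 + L.wx ∧ v.2 ≤ p.2 ∧ p.2 ≤ v.2 + L.lx) := by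
  obtain ⟨-, h1, h2⟩ := h
  simp only [planeTranslate, LShape.toSet, Set.mem_image, Set.mem_union, Set.mem_Icc,
    Prod.le_def, ← h1, ← h2]
  constructor
  · rintro ⟨q, hq, rfl⟩
    simp only [Prod.fst_add, Prod.snd_add]
    rcases hq with ⟨⟨a, b⟩, c, d⟩ | ⟨⟨a, b⟩, c, d⟩
    · left; refine ⟨?_, ?_, ?_, ?_⟩ <;> linarith
    · right; refine ⟨?_, ?_, ?_, ?_⟩ <;> linarith
  · intro hp
    refine ⟨p - v, ?_, by simp⟩
    simp only [Prod.fst_sub, Prod.snd_sub]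
    rcases hp with ⟨a, b, c, d⟩ | ⟨a, b, c, d⟩
    · left; refine ⟨⟨?_, ?_⟩, ?_, ?_⟩ <;> linarith
    · right; refine ⟨⟨?_, ?_⟩, ?_, ?_⟩ <;> linarith

lemma interior_le_fst {S : Set (ℝ × ℝ)} {c : ℝ} (h : ∀ p ∈ S, c ≤ p.1) :
    ∀ p ∈ interior S, c < p.1 := by
  intro p hp
  have h1 : S ⊆ Set.Ici c ×ˢ Set.univ := fun q hq => ⟨h q hq, trivial⟩
  have h2 := interior_mono h1 hp
  rw [interior_prod_eq, interior_Ici] at h2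
  exact h2.1

lemma interior_le_snd {S : Set (ℝ × ℝ)} {c : ℝ} (h : ∀ p ∈ S, c ≤ p.2) :
    ∀ p ∈ interior S, c < p.2 := by
  intro p hp
  have h1 : S ⊆ Set.univ ×ˢ Set.Ici c := fun q hq => ⟨trivial, h q hq⟩
  have h2 := interior_mono h1 hp
  rw [interior_prod_eq, interior_Ici] at h2
  exact h2.2

lemma disjoint_of_fst {S S' : Set (ℝ × ℝ)} {c : ℝ} (h : ∀ p ∈ S, p.1 ≤ c)
    (h' : ∀ p ∈ S', c ≤ p.1) : Disjoint (interior S) (interior S') := by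
  rw [Set.disjoint_left]
  intro p hp hp'
  have h1 := interior_le_fst h' p hp'
  have h2 := h p (interior_subset hp)
  linarith

lemma disjoint_of_snd {S S' : Set (ℝ × ℝ)} {c : ℝ} (h : ∀ p ∈ S, p.2 ≤ c)
    (h' : ∀ p ∈ S', c ≤ p.2) : Disjoint (interior S) (interior S') := by
  rw [Set.disjoint_left]
  intro p hp hp'
  have h1 := interior_le_snd h' p hp'
  have h2 := h p (interior_subset hp)
  linarith

/-- Nesting: an L-shape may be put into the inner corner of another one, whatever the arm
lengths. -/
lemma disjoint_diag {L L' : LShape} (h : SymL L) (h' : SymL L') {v v' : ℝ × ℝ}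
    (h1 : v.1 + L.wx ≤ v'.1) (h2 : v.2 + L.wx ≤ v'.2) :
    Disjoint (interior (planeTranslate v L.toSet)) (interior (planeTranslate v' L'.toSet)) := by
  rw [Set.disjoint_left]
  intro p hp hp'
  have e1 := interior_le_fst (S := planeTranslate v' L'.toSet) (c := v'.1)
    (fun q hq => by rcases (h'.mem v' q).1 hq with a | a <;> exact a.1) p hp'
  have e2 := interior_le_snd (S := planeTranslate v' L'.toSet) (c := v'.2)
    (fun q hq => by rcases (h'.mem v' q).1 hq with a | a <;> exact a.2.2.1) p hp'
  rcases (h.mem v p).1 (interior_subset hp) with a | a <;> linarith [a.2.1, a.2.2.2]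

lemma SymL.mem_box {L : LShape} (h : SymL L) {v p : ℝ × ℝ} (hp : p ∈ planeTranslate v L.toSet) :
    v.1 ≤ p.1 ∧ p.1 ≤ v.1 + L.lx ∧ v.2 ≤ p.2 ∧ p.2 ≤ v.2 + L.lx := by
  have := h.w_le
  rcases (h.mem v p).1 hp with a | a <;> refine ⟨a.1, ?_, a.2.2.1, ?_⟩ <;>
    linarith [a.2.1, a.2.2.2]

lemma interior_zero {L : LShape} (h : SymL L) (hw : L.wx = 0) (v : ℝ × ℝ) :
    interior (planeTranslate v L.toSet) = ∅ := by
  rw [Set.eq_empty_iff_forall_notMem]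
  intro p hp
  have e1 := interior_le_fst (S := planeTranslate v L.toSet) (c := v.1)
    (fun q hq => (h.mem_box hq).1) p hp
  have e2 := interior_le_snd (S := planeTranslate v L.toSet) (c := v.2)
    (fun q hq => (h.mem_box hq).2.2.1) p hp
  rcases (h.mem v p).1 (interior_subset hp) with a | a <;> rw [hw] at a <;>
    linarith [a.2.1, a.2.2.2]

lemma subset_unitBin {L : LShape} (h : SymL L) {v : ℝ × ℝ} (h1 : 0 ≤ v.1) (h2 : 0 ≤ v.2)
    (h3 : v.1 + L.lx ≤ 1) (h4 : v.2 + L.lx ≤ 1) : planeTranslate v L.toSet ⊆ unitBin := by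
  intro p hp
  obtain ⟨a, b, c, d⟩ := h.mem_box hp
  exact ⟨⟨by simp; linarith, by simp; linarith⟩, ⟨by simp; linarith, by simp; linarith⟩⟩

lemma bounds_of_subset {L : LShape} (h : SymL L) {v : ℝ × ℝ}
    (hs : planeTranslate v L.toSet ⊆ unitBin) :
    0 ≤ v.1 ∧ 0 ≤ v.2 ∧ v.1 + L.lx ≤ 1 ∧ v.2 + L.lx ≤ 1 := by
  have w0 := h.w_nonneg
  have wl := h.w_le
  have h1 := hs ((h.mem v v).2 (Or.inl ⟨le_rfl, by linarith, le_rfl, by linarith⟩))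
  have h2 := hs ((h.mem v (v.1 + L.lx, v.2)).2
    (Or.inl ⟨by simp; linarith, le_rfl, le_rfl, by simp; linarith⟩))
  have h3 := hs ((h.mem v (v.1, v.2 + L.lx)).2
    (Or.inr ⟨le_rfl, by simp; linarith, by simp; linarith, le_rfl⟩))
  simp only [unitBin, Set.mem_Icc, Prod.le_def] at h1 h2 h3
  exact ⟨h1.1.1, h1.1.2, h2.2.1, h3.2.2⟩

lemma vert_subset {L : LShape} (h : SymL L) (v : ℝ × ℝ) :
    Set.Ioo v.1 (v.1 + L.wx) ×ˢ Set.Ioo v.2 (v.2 + L.lx) ⊆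
      interior (planeTranslate v L.toSet) := by
  apply interior_maximal _ (isOpen_Ioo.prod isOpen_Ioo)
  rintro p ⟨⟨a, b⟩, c, d⟩
  exact (h.mem v p).2 (Or.inr ⟨a.le, b.le, c.le, d.le⟩)

lemma horiz_subset {L : LShape} (h : SymL L) (v : ℝ × ℝ) :
    Set.Ioo v.1 (v.1 + L.lx) ×ˢ Set.Ioo v.2 (v.2 + L.wx) ⊆
      interior (planeTranslate v L.toSet) := by
  apply interior_maximal _ (isOpen_Ioo.prod isOpen_Ioo)
  rintro p ⟨⟨a, b⟩, c, d⟩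
  exact (h.mem v p).2 (Or.inl ⟨a.le, b.le, c.le, d.le⟩)

/-- Area bound for disjoint rectangles `(x i, x i + a i) × (y i, y i + b i)` in a box. -/
lemma rect_area (T : Finset ℕ) (x y a b : ℕ → ℝ) (X Y : ℝ) (hX : 0 ≤ X) (hY : 0 ≤ Y)
    (ha : ∀ i ∈ T, 0 ≤ a i) (hb : ∀ i ∈ T, 0 ≤ b i)
    (hx : ∀ i ∈ T, 0 ≤ x i ∧ x i + a i ≤ X) (hy : ∀ i ∈ T, 0 ≤ y i ∧ y i + b i ≤ Y)
    (hd : ∀ i ∈ T, ∀ j ∈ T, i ≠ j →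
      Disjoint (Set.Ioo (x i) (x i + a i) ×ˢ Set.Ioo (y i) (y i + b i))
        (Set.Ioo (x j) (x j + a j) ×ˢ Set.Ioo (y j) (y j + b j))) :
    ∑ i ∈ T, a i * b i ≤ X * Y := by
  have vol : ∀ x y a b : ℝ, 0 ≤ a → MeasureTheory.volume
      (Set.Ioo x (x + a) ×ˢ Set.Ioo y (y + b)) = ENNReal.ofReal (a * b) := by
    intro x y a b ha
    rw [MeasureTheory.Measure.volume_eq_prod, MeasureTheory.Measure.prod_prod, Real.volume_Ioo,
      Real.volume_Ioo, ← ENNReal.ofReal_mul (by linarith)]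
    congr 1; ring
  have h1 := MeasureTheory.measure_biUnion_finset (μ := MeasureTheory.volume) (s := T)
    (f := fun i => Set.Ioo (x i) (x i + a i) ×ˢ Set.Ioo (y i) (y i + b i))
    (fun i hi j hj hij => hd i hi j hj hij)
    (fun i _ => measurableSet_Ioo.prod measurableSet_Ioo)
  have h2 : (⋃ i ∈ T, Set.Ioo (x i) (x i + a i) ×ˢ Set.Ioo (y i) (y i + b i)) ⊆
      Set.Ioo 0 (0 + X) ×ˢ Set.Ioo 0 (0 + Y) := by
    intro p hp
    simp only [Set.mem_iUnion] at hp
    obtain ⟨i, hi, ⟨p1, p2⟩, p3, p4⟩ := hp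
    have := hx i hi
    have := hy i hi
    exact ⟨⟨by linarith, by linarith⟩, ⟨by linarith, by linarith⟩⟩
  have h3 := MeasureTheory.measure_mono (μ := MeasureTheory.volume) h2
  rw [h1, vol _ _ _ _ hX, Finset.sum_congr rfl (fun i hi => vol _ _ _ _ (ha i hi)),
    ← ENNReal.ofReal_sum_of_nonneg (fun i hi => mul_nonneg (ha i hi) (hb i hi))] at h3
  exact (ENNReal.ofReal_le_ofReal_iff (by positivity)).1 h3

/-! ### Lower bounds for the optimum -/

/-- The first `N` items of `f` are packed into `m` bins by `bin` and `v`. -/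
structure Packing (f : ℕ → LShape) (N m : ℕ) (bin : ℕ → ℕ) (v : ℕ → ℝ × ℝ) : Prop where
  lt : ∀ i < N, bin i < m
  sub : ∀ i < N, planeTranslate (v i) (f i).toSet ⊆ unitBin
  disj : ∀ i < N, ∀ j < N, i ≠ j → bin i = bin j →
    Disjoint (interior (planeTranslate (v i) (f i).toSet))
      (interior (planeTranslate (v j) (f j).toSet))

/-- Items with arms longer than `1/2` in the same bin: their vertical arms all cross the line
`y = 1/2`, hence their widths, or any smaller ones, add up to at most the right end of the range
they occupy. -/
lemma long_sum {f : ℕ → LShape} (hf : ∀ i, SymL (f i)) {N m : ℕ} {bin : ℕ → ℕ} {v : ℕ → ℝ × ℝ}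
    (P : Packing f N m bin v) (T : Finset ℕ) (b : ℕ) (hN : ∀ i ∈ T, i < N)
    (hb : ∀ i ∈ T, bin i = b) (hl : ∀ i ∈ T, 1 / 2 < (f i).lx)
    (q : ℕ → ℝ) (R : ℝ) (hR : 0 ≤ R) (hq : ∀ i ∈ T, 0 ≤ q i ∧ q i ≤ (f i).wx)
    (hqR : ∀ i ∈ T, 1 - (f i).lx + q i ≤ R) : ∑ i ∈ T, q i ≤ R := by
  have h := rect_area T (fun i => (v i).1) (fun _ => 0) q (fun _ => 1) R 1 hR zero_le_one
    (fun i hi => (hq i hi).1) (fun _ _ => zero_le_one)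
    (fun i hi => ?_) (fun i _ => by norm_num) (fun i hi j hj hij => ?_)
  · simpa using h
  · have := bounds_of_subset (hf i) (P.sub i (hN i hi))
    have := hqR i hi
    exact ⟨by linarith, by linarith⟩
  · rw [Set.disjoint_left]
    rintro p ⟨⟨a1, a2⟩, -⟩ ⟨⟨b1, b2⟩, -⟩
    have hd := P.disj i (hN i hi) j (hN j hj) hij ((hb i hi).trans (hb j hj).symm)
    rw [Set.disjoint_left] at hd
    have ci := bounds_of_subset (hf i) (P.sub i (hN i hi))
    have cj := bounds_of_subset (hf j) (P.sub j (hN j hj))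
    have li := hl i hi
    have lj := hl j hj
    have qi := (hq i hi).2
    have qj := (hq j hj).2
    refine hd (a := (p.1, 1 / 2)) (vert_subset (hf i) (v i) ?_) (vert_subset (hf j) (v j) ?_)
    · exact ⟨⟨a1, by dsimp only; linarith⟩, ⟨by dsimp only; linarith, by dsimp only; linarith⟩⟩
    · exact ⟨⟨b1, by dsimp only; linarith⟩, ⟨by dsimp only; linarith, by dsimp only; linarith⟩⟩

lemma area_sum {f : ℕ → LShape} (hf : ∀ i, SymL (f i)) {N m : ℕ} {bin : ℕ → ℕ} {v : ℕ → ℝ × ℝ}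
    (P : Packing f N m bin v) :
    ∑ i ∈ Finset.range N, (f i).lx * (f i).wx ≤ m := by
  rw [← Finset.sum_fiberwise_of_maps_to (t := Finset.range m) (g := bin)
    (fun i hi => Finset.mem_range.2 (P.lt i (Finset.mem_range.1 hi)))]
  have : ∀ b ∈ Finset.range m,
      ∑ i ∈ Finset.range N with bin i = b, (f i).lx * (f i).wx ≤ 1 * 1 := by
    intro b _
    apply rect_area _ (fun i => (v i).1) (fun i => (v i).2) (fun i => (f i).lx)
      (fun i => (f i).wx) 1 1 zero_le_one zero_le_one
    · intro i _; linarith [(hf i).w_nonneg, (hf i).w_le]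
    · intro i _; exact (hf i).w_nonneg
    · intro i hi
      simp only [Finset.mem_filter, Finset.mem_range] at hi
      have := bounds_of_subset (hf i) (P.sub i hi.1)
      exact ⟨this.1, this.2.2.1⟩
    · intro i hi
      simp only [Finset.mem_filter, Finset.mem_range] at hi
      have := bounds_of_subset (hf i) (P.sub i hi.1)
      exact ⟨this.2.1, by linarith [(hf i).w_le]⟩
    · intro i hi j hj hij
      simp only [Finset.mem_filter, Finset.mem_range] at hi hj
      exact (P.disj i hi.1 j hj.1 hij (hi.2.trans hj.2.symm)).mono
        (horiz_subset (hf i) (v i)) (horiz_subset (hf j) (v j))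
  refine (Finset.sum_le_sum this).trans ?_
  simp

/-- Total width of long items in a class whose vertical arms all lie in `[0, R]`. -/
lemma class_sum {f : ℕ → LShape} (hf : ∀ i, SymL (f i)) {N m : ℕ} {bin : ℕ → ℕ} {v : ℕ → ℝ × ℝ}
    (P : Packing f N m bin v) (T : Finset ℕ) (hN : ∀ i ∈ T, i < N)
    (hl : ∀ i ∈ T, 1 / 2 < (f i).lx) (R : ℝ) (hR : 0 ≤ R)
    (hqR : ∀ i ∈ T, 1 - (f i).lx + (f i).wx ≤ R) : ∑ i ∈ T, (f i).wx ≤ m * R := by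
  rw [← Finset.sum_fiberwise_of_maps_to (t := Finset.range m) (g := bin)
    (fun i hi => Finset.mem_range.2 (P.lt i (hN i hi)))]
  have : ∀ b ∈ Finset.range m, ∑ i ∈ T with bin i = b, (f i).wx ≤ R := by
    intro b _
    refine long_sum hf P _ b (fun i hi => ?_) (fun i hi => ?_) (fun i hi => ?_)
      (fun i => (f i).wx) R hR (fun i hi => ⟨(hf i).w_nonneg, le_rfl⟩) (fun i hi => ?_)
    all_goals rw [Finset.mem_filter] at hi
    · exact hN i hi.1
    · exact hi.2
    · exact hl i hi.1
    · exact hqR i hi.1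
  refine (Finset.sum_le_sum this).trans ?_
  simp

/-- At most six wide items per bin may have intervals `[min d w, 2w)` with a common point `p`,
where `d = 1 - ℓ`: if `q` is their least width, all of them satisfy `d < 6q`. -/
lemma wide_card {f : ℕ → LShape} (hf : ∀ i, SymL (f i)) {N m : ℕ} {bin : ℕ → ℕ} {v : ℕ → ℝ × ℝ}
    (P : Packing f N m bin v) (T : Finset ℕ) (hN : ∀ i ∈ T, i < N)
    (hl : ∀ i ∈ T, 1 / 2 < (f i).lx) (hw : ∀ i ∈ T, 1 - (f i).lx < 3 * (f i).wx) (p : ℝ)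
    (hp : ∀ i ∈ T, min (1 - (f i).lx) (f i).wx ≤ p ∧ p < 2 * (f i).wx) : T.card ≤ 6 * m := by
  have := Finset.card_le_mul_card_image_of_maps_to (f := bin) (s := T) (t := Finset.range m)
    (fun i hi => Finset.mem_range.2 (P.lt i (hN i hi))) 6 ?_
  · simpa using this
  intro b _
  set U := T.filter (fun i => bin i = b) with hU
  have hUT : ∀ i ∈ U, i ∈ T := fun i hi => (Finset.mem_filter.1 hi).1
  rcases U.eq_empty_or_nonempty with h | h
  · simp [h]
  obtain ⟨i0, hi0, hmin⟩ := Finset.exists_min_image U (fun i => (f i).wx) h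
  obtain ⟨i1, hi1, hmax⟩ := Finset.exists_max_image U (fun i => 1 - (f i).lx) h
  set q := (f i0).wx with hq
  have hq0 : 0 < q := by
    have := hw i0 (hUT i0 hi0)
    have := (hf i0).l_le
    linarith
  have hd : 1 - (f i1).lx < 6 * q := by
    have a1 := hp i1 (hUT i1 hi1)
    have a0 := hp i0 (hUT i0 hi0)
    have a2 := hw i1 (hUT i1 hi1)
    rcases min_le_iff.1 a1.1 with h | h <;> linarith [a0.2]
  have hs := long_sum hf P U b (fun i hi => hN i (hUT i hi))
    (fun i hi => (Finset.mem_filter.1 hi).2) (fun i hi => hl i (hUT i hi)) (fun _ => q)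
    (1 - (f i1).lx + q) (by linarith [(hf i1).l_le]) (fun i hi => ⟨hq0.le, hmin i hi⟩)
    (fun i hi => by have := hmax i hi; linarith)
  rw [Finset.sum_const, nsmul_eq_mul] at hs
  by_contra hcon
  have h7 : (7 : ℝ) ≤ U.card := by exact_mod_cast (by omega : 7 ≤ U.card)
  nlinarith

/-! ### Geometry of dyadic cells -/

/-- The abscissa of the lower left corner, within its bin, of the cell `n` of level `k`; this cell is
a square of side `2⁻ᵏ` in the bin `n / 4ᵏ`. -/
noncomputable def cellX : ℕ → ℕ → ℝ
  | 0, _ => 0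
  | k + 1, n => cellX k (n / 4) + ((n % 2 : ℕ) : ℝ) * (1 / 2) ^ (k + 1)

/-- The ordinate of the lower left corner, within its bin, of the cell `n` of level `k`. -/
noncomputable def cellY : ℕ → ℕ → ℝ
  | 0, _ => 0
  | k + 1, n => cellY k (n / 4) + ((n / 2 % 2 : ℕ) : ℝ) * (1 / 2) ^ (k + 1)

/-- `[x', x'+s'] × [y', y'+s']` is contained in `[x, x+s] × [y, y+s]`. -/
def BoxIn (x y s x' y' s' : ℝ) : Prop := x ≤ x' ∧ x' + s' ≤ x + s ∧ y ≤ y' ∧ y' + s' ≤ y + s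

/-- The squares with corners `(x, y)`, `(x', y')` and sides `s`, `s'` are separated by a vertical or
a horizontal line. -/
def BoxSep (x y s x' y' s' : ℝ) : Prop :=
  x + s ≤ x' ∨ x' + s' ≤ x ∨ y + s ≤ y' ∨ y' + s' ≤ y

lemma bit_cases (n : ℕ) : ((n % 2 : ℕ) : ℝ) = 0 ∨ ((n % 2 : ℕ) : ℝ) = 1 := by
  rcases Nat.mod_two_eq_zero_or_one n with h | h <;> simp [h]

lemma cell_step (k n : ℕ) : BoxIn (cellX k (n / 4)) (cellY k (n / 4)) ((1 / 2) ^ k)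
    (cellX (k + 1) n) (cellY (k + 1) n) ((1 / 2) ^ (k + 1)) := by
  have h1 := bit_cases n
  have h2 := bit_cases (n / 2)
  have hp : (0 : ℝ) < (1 / 2) ^ k := by positivity
  simp only [BoxIn, cellX, cellY, pow_succ]
  rcases h1 with h1 | h1 <;> rcases h2 with h2 | h2 <;> rw [h1, h2] <;>
    refine ⟨?_, ?_, ?_, ?_⟩ <;> linarith

lemma cell_in (k r n : ℕ) : BoxIn (cellX k (n / 4 ^ r)) (cellY k (n / 4 ^ r)) ((1 / 2) ^ k)
    (cellX (k + r) n) (cellY (k + r) n) ((1 / 2) ^ (k + r)) := by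
  induction r generalizing n with
  | zero => simp [BoxIn]
  | succ r ih =>
    have h1 := ih (n / 4)
    have h2 := cell_step (k + r) n
    rw [Nat.div_div_eq_div_mul, mul_comm, ← pow_succ] at h1
    simp only [BoxIn, ← add_assoc] at *
    refine ⟨?_, ?_, ?_, ?_⟩ <;> linarith [h1.1, h1.2.1, h1.2.2.1, h1.2.2.2, h2.1, h2.2.1, h2.2.2.1,
      h2.2.2.2]

lemma cell_unit (k n : ℕ) : 0 ≤ cellX k n ∧ cellX k n + (1 / 2) ^ k ≤ 1 ∧
    0 ≤ cellY k n ∧ cellY k n + (1 / 2) ^ k ≤ 1 := by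
  have := cell_in 0 k n
  simpa [BoxIn, cellX, cellY] using this

lemma boxSep_mono {x y s x' y' s' u v r u' v' r' : ℝ} (h : BoxSep x y s x' y' s')
    (h1 : BoxIn x y s u v r) (h2 : BoxIn x' y' s' u' v' r') : BoxSep u v r u' v' r' := by
  obtain ⟨a, b, c, d⟩ := h1
  obtain ⟨a', b', c', d'⟩ := h2
  rcases h with h | h | h | h
  · left; linarith
  · right; left; linarith
  · right; right; left; linarith
  · right; right; right; linarith

lemma cell_sep_same (k n n' : ℕ) (hne : n ≠ n') (hb : n / 4 ^ k = n' / 4 ^ k) :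
    BoxSep (cellX k n) (cellY k n) ((1 / 2) ^ k) (cellX k n') (cellY k n') ((1 / 2) ^ k) := by
  induction k generalizing n n' with
  | zero => simp at hb; exact (hne hb).elim
  | succ k ih =>
    by_cases h : n / 4 = n' / 4
    · have hp : (0 : ℝ) < (1 / 2) ^ (k + 1) := by positivity
      simp only [BoxSep, cellX, cellY, h]
      by_cases hx : n % 2 = n' % 2
      · have hy : n / 2 % 2 ≠ n' / 2 % 2 := by omega
        rcases Nat.mod_two_eq_zero_or_one (n / 2) with e | e <;>
          rcases Nat.mod_two_eq_zero_or_one (n' / 2) with e' | e'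
        · omega
        · right; right; left; rw [e, e']; simp
        · right; right; right; rw [e, e']; simp
        · omega
      · rcases Nat.mod_two_eq_zero_or_one n with e | e <;>
          rcases Nat.mod_two_eq_zero_or_one n' with e' | e'
        · omega
        · left; rw [e, e']; simp
        · right; left; rw [e, e']; simp
        · omega
    · have := ih (n / 4) (n' / 4) h (by
        rw [Nat.div_div_eq_div_mul, Nat.div_div_eq_div_mul, mul_comm, ← pow_succ]; exact hb)
      exact boxSep_mono this (cell_step k n) (cell_step k n')

lemma cell_sep (k n k' n' : ℕ) (hc : ¬ CellComp k n k' n') (hb : n / 4 ^ k = n' / 4 ^ k') :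
    BoxSep (cellX k n) (cellY k n) ((1 / 2) ^ k) (cellX k' n') (cellY k' n') ((1 / 2) ^ k') := by
  have aux : ∀ k n k' n', k ≤ k' → ¬ CellSub k n k' n' → n / 4 ^ k = n' / 4 ^ k' →
      BoxSep (cellX k n) (cellY k n) ((1 / 2) ^ k) (cellX k' n') (cellY k' n') ((1 / 2) ^ k') := by
    intro k n k' n' hk hc hb
    obtain ⟨r, rfl⟩ := Nat.exists_eq_add_of_le hk
    have h1 : n ≠ n' / 4 ^ r := by
      rintro rfl
      exact hc ⟨hk, by simp⟩
    have h2 := cell_sep_same k n (n' / 4 ^ r) h1 (by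
      rw [hb, Nat.div_div_eq_div_mul, ← pow_add, add_comm])
    exact boxSep_mono h2 ⟨le_rfl, le_rfl, le_rfl, le_rfl⟩ (cell_in k r n')
  rw [CellComp, not_or] at hc
  rcases le_total k k' with h | h
  · exact aux k n k' n' h hc.1 hb
  · rcases aux k' n' k n h hc.2 hb.symm with g | g | g | g
    · right; left; exact g
    · left; exact g
    · right; right; right; exact g
    · right; right; left; exact g

/-! ### The algorithm -/

/-- The types of items, with `d = 1 - ℓ`: degenerate items (`w = 0`); wide items (`ℓ > 1/2` and
`d < 3w`); narrow items (`ℓ > 1/2` and `3w ≤ d`) of class `z`, where `3⁻ᶻ ≤ d < 3·3⁻ᶻ`; small items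
(`ℓ ≤ 1/2`) of class `k`, where `2⁻ᵏ/4 < ℓ ≤ 2⁻ᵏ/2`. -/
inductive Kind where
  | zero : Kind
  | wide : Kind
  | narrow (z : ℕ) : Kind
  | small (k : ℕ) : Kind

open Classical in
/-- The type of an item. -/
noncomputable def kind (L : LShape) : Kind :=
  if L.wx ≤ 0 then .zero
  else if L.lx ≤ 1 / 2 then .small (sInf {k : ℕ | (1 / 2 : ℝ) ^ (k + 2) < L.lx})
  else if 1 - L.lx < 3 * L.wx then .wide
  else .narrow (sInf {z : ℕ | (1 / 3 : ℝ) ^ z ≤ 1 - L.lx})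

lemma kind_zero {L : LShape} (h : SymL L) (hk : kind L = .zero) : L.wx = 0 := by
  unfold kind at hk
  split_ifs at hk with h1
  exact le_antisymm h1 h.w_nonneg

lemma kind_wide {L : LShape} (hk : kind L = .wide) :
    0 < L.wx ∧ 1 / 2 < L.lx ∧ 1 - L.lx < 3 * L.wx := by
  unfold kind at hk
  split_ifs at hk with h1 h2 h3
  exact ⟨not_le.1 h1, not_le.1 h2, h3⟩

lemma kind_small {L : LShape} {k : ℕ} (h : SymL L) (hk : kind L = .small k) :
    (1 / 2) ^ (k + 2) < L.lx ∧ L.lx ≤ (1 / 2) ^ (k + 1) := by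
  unfold kind at hk
  split_ifs at hk with h1 h2 h3
  have hl : 0 < L.lx := lt_of_lt_of_le (not_le.1 h1) h.w_le
  simp only [Kind.small.injEq] at hk
  have hne : {k : ℕ | (1 / 2 : ℝ) ^ (k + 2) < L.lx}.Nonempty := by
    obtain ⟨n, hn⟩ := exists_pow_lt_of_lt_one hl (by norm_num : (1 / 2 : ℝ) < 1)
    exact ⟨n, lt_of_le_of_lt (pow_le_pow_of_le_one (by norm_num) (by norm_num) (by omega)) hn⟩
  constructor
  · have := Nat.sInf_mem hne
    rw [hk] at this
    exact this
  · rcases k with _ | k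
    · simpa using h2
    · have : k ∉ {k : ℕ | (1 / 2 : ℝ) ^ (k + 2) < L.lx} :=
        Nat.notMem_of_lt_sInf (by rw [hk]; omega)
      exact not_lt.1 this

lemma kind_narrow {L : LShape} {z : ℕ} (hk : kind L = .narrow z) :
    1 / 2 < L.lx ∧ 3 * L.wx ≤ 1 - L.lx ∧ (1 / 3) ^ z ≤ 1 - L.lx ∧
      1 - L.lx < 3 * (1 / 3) ^ z := by
  unfold kind at hk
  split_ifs at hk with h1 h2 h3
  have hl : 0 < 1 - L.lx := by linarith
  simp only [Kind.narrow.injEq] at hk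
  have hne : {z : ℕ | (1 / 3 : ℝ) ^ z ≤ 1 - L.lx}.Nonempty := by
    obtain ⟨n, hn⟩ := exists_pow_lt_of_lt_one hl (by norm_num : (1 / 3 : ℝ) < 1)
    exact ⟨n, hn.le⟩
  refine ⟨not_le.1 h2, not_lt.1 h3, ?_, ?_⟩
  · have := Nat.sInf_mem hne
    rw [hk] at this
    exact this
  · rcases z with _ | z
    · simp; linarith
    · have : z ∉ {z : ℕ | (1 / 3 : ℝ) ^ z ≤ 1 - L.lx} :=
        Nat.notMem_of_lt_sInf (by rw [hk]; omega)
      have := not_le.1 (show ¬ (1 / 3 : ℝ) ^ z ≤ 1 - L.lx from this)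
      rw [pow_succ]
      linarith

/-- The total width that is put into one slot (for narrow items) or one cell (for small items) of a
class; the last item may exceed it. -/
noncomputable def cap : Kind → ℝ
  | .narrow z => (1 / 3) ^ z / 3
  | .small k => (1 / 2) ^ (k + 1)
  | _ => 1

lemma cap_pos (κ : Kind) : 0 < cap κ := by
  cases κ <;> simp only [cap] <;> positivity

open Classical in
/-- The total width of the items before the `i`-th one of the same type and class. -/
noncomputable def psum (f : ℕ → LShape) (i : ℕ) : ℝ :=
  ∑ j ∈ (Finset.range i).filter (fun j => kind (f j) = kind (f i)), (f j).wx

/-- The index, within its class, of the slot or cell that receives the item `i`. The items of a class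
are laid out consecutively on the half-line, which is cut into pieces of length `cap`. -/
noncomputable def slot (f : ℕ → LShape) (i : ℕ) : ℕ := ⌊psum f i / cap (kind (f i))⌋₊

/-- The offset of the item `i` in its slot or cell. -/
noncomputable def offs (f : ℕ → LShape) (i : ℕ) : ℝ := psum f i - slot f i * cap (kind (f i))

/-- The key of a small item, asking for a cell. -/
noncomputable def skey (f : ℕ → LShape) (i : ℕ) : Option (ℕ × ℕ) :=
  match kind (f i) with
  | .small k => some (k, slot f i)
  | _ => none

open Classical in
/-- Left end of the interval `[min d w, 2w)` reserved on the diagonal for a wide item. -/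
noncomputable def wA (f : ℕ → LShape) (i : ℕ) : ℝ :=
  if kind (f i) = .wide then min (1 - (f i).lx) (f i).wx else 0

open Classical in
/-- Right end of the interval `[min d w, 2w)` reserved on the diagonal for a wide item. -/
noncomputable def wB (f : ℕ → LShape) (i : ℕ) : ℝ :=
  if kind (f i) = .wide then 2 * (f i).wx else 0

/-- The decision for the item `i`: bin and position. The residue of the bin index modulo `4` is the
type of the items in the bin. The slot of class `z` for narrow items occupies the part
`[(2/3)·3⁻ᶻ, 2·3⁻ᶻ]` of the diagonal, and each of their bins has one slot of each class. -/
noncomputable def place (f : ℕ → LShape) (i : ℕ) : ℕ × ℝ × ℝ :=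
  match kind (f i) with
  | .zero => (0, 0, 0)
  | .wide => (4 * (3 * (ktLev (wA f) (wB f) i - 1) + ktCol (wA f) (wB f) i) + 1, wA f i, wA f i)
  | .narrow z => (4 * slot f i + 2, 2 / 3 * (1 / 3) ^ z + offs f i, 2 / 3 * (1 / 3) ^ z + offs f i)
  | .small k => (4 * (alloc (skey f) i / 4 ^ k) + 3, cellX k (alloc (skey f) i) + offs f i,
      cellY k (alloc (skey f) i) + offs f i)

lemma place_congr (f g : ℕ → LShape) (i : ℕ) (h : ∀ j ≤ i, f j = g j) : place f i = place g i := by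
  classical
  have h1 : ∀ j ≤ i, psum f j = psum g j := by
    intro j hj
    unfold psum
    rw [h j hj]
    refine Finset.sum_congr (Finset.filter_congr fun x hx => ?_) fun x hx => ?_
    · rw [h x (by have := Finset.mem_range.1 hx; omega)]
    · rw [h x (by have := Finset.mem_range.1 (Finset.mem_filter.1 hx).1; omega)]
  have h2 : ∀ j ≤ i, slot f j = slot g j := by
    intro j hj
    rw [slot, slot, h1 j hj, h j hj]
  have h3 : offs f i = offs g i := by
    rw [offs, offs, h1 i le_rfl, h2 i le_rfl, h i le_rfl]
  have h4 : ∀ j ≤ i, skey f j = skey g j := by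
    intro j hj
    rw [skey, skey, h2 j hj, h j hj]
  have h5 := alloc_congr _ _ i h4
  have h6 : ∀ j ≤ i, wA f j = wA g j := by
    intro j hj; rw [wA, wA, h j hj]
  have h7 : ∀ j ≤ i, wB f j = wB g j := by
    intro j hj; rw [wB, wB, h j hj]
  obtain ⟨h8, h9⟩ := kt_congr _ _ _ _ i h6 h7
  unfold place
  rw [h i le_rfl, h2 i le_rfl, h3, h5, h6 i le_rfl, h8, h9]

lemma psum_nonneg {f : ℕ → LShape} (hf : ∀ i, SymL (f i)) (i : ℕ) : 0 ≤ psum f i :=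
  Finset.sum_nonneg fun j _ => (hf j).w_nonneg

lemma offs_nonneg {f : ℕ → LShape} (hf : ∀ i, SymL (f i)) (i : ℕ) : 0 ≤ offs f i := by
  have hc := cap_pos (kind (f i))
  have h := Nat.floor_le (div_nonneg (psum_nonneg hf i) hc.le)
  rw [le_div_iff₀ hc] at h
  rw [offs, slot]
  linarith

lemma offs_lt (f : ℕ → LShape) (i : ℕ) : offs f i < cap (kind (f i)) := by
  have hc := cap_pos (kind (f i))
  have h := Nat.lt_floor_add_one (psum f i / cap (kind (f i)))
  rw [div_lt_iff₀ hc] at h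
  rw [offs, slot]
  linarith

lemma psum_add {f : ℕ → LShape} (hf : ∀ i, SymL (f i)) {i j : ℕ} (hij : i < j)
    (hk : kind (f i) = kind (f j)) : psum f i + (f i).wx ≤ psum f j := by
  classical
  unfold psum
  rw [hk, add_comm, ← Finset.sum_insert (f := fun j => (f j).wx) (by simp)]
  apply Finset.sum_le_sum_of_subset_of_nonneg
  · intro x hx
    simp only [Finset.mem_insert, Finset.mem_filter, Finset.mem_range] at hx ⊢
    rcases hx with rfl | hx
    · exact ⟨hij, hk⟩
    · exact ⟨by omega, hx.2⟩
  · exact fun x _ _ => (hf x).w_nonneg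

lemma offs_sep {f : ℕ → LShape} (hf : ∀ i, SymL (f i)) {i j : ℕ} (hij : i ≠ j)
    (hk : kind (f i) = kind (f j)) (hs : slot f i = slot f j) :
    offs f i + (f i).wx ≤ offs f j ∨ offs f j + (f j).wx ≤ offs f i := by
  rcases lt_or_gt_of_ne hij with h | h
  · left
    have := psum_add hf h hk
    rw [offs, offs, hs, hk]; linarith
  · right
    have := psum_add hf h hk.symm
    rw [offs, offs, hs, hk]; linarith

lemma wA_lt_wB {f : ℕ → LShape} {i : ℕ} (hk : kind (f i) = .wide) :
    wA f i < wB f i := by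
  have := kind_wide hk
  rw [wA, wB, if_pos hk, if_pos hk]
  have := min_le_right (1 - (f i).lx) (f i).wx
  linarith

lemma place_sub {f : ℕ → LShape} (hf : ∀ i, SymL (f i)) (i : ℕ) :
    planeTranslate (place f i).2 (f i).toSet ⊆ unitBin := by
  have hw := (hf i).w_nonneg
  have hwl := (hf i).w_le
  have hl := (hf i).l_le
  have h0 := offs_nonneg hf i
  have hlt := offs_lt f i
  apply subset_unitBin (hf i)
  all_goals
    unfold place
    rcases hk : kind (f i) with _ | _ | z | k
    · dsimp only; linarith
    · dsimp only
      have h1 : 0 ≤ min (1 - (f i).lx) (f i).wx := le_min (by linarith) hw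
      have h2 := min_le_left (1 - (f i).lx) (f i).wx
      rw [wA, if_pos hk]
      linarith
    · dsimp only
      have := kind_narrow hk
      rw [hk, cap] at hlt
      have : (0 : ℝ) < (1 / 3) ^ z := by positivity
      linarith
    · dsimp only
      have h1 := kind_small (hf i) hk
      have h2 := cell_unit k (alloc (skey f) i)
      rw [hk, cap] at hlt
      have h3 : (1 / 2 : ℝ) ^ k = 2 * (1 / 2) ^ (k + 1) := by rw [pow_succ]; ring
      linarith

lemma skey_small {f : ℕ → LShape} {i k : ℕ} (hk : kind (f i) = .small k) :
    skey f i = some (k, slot f i) := by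
  rw [skey, hk]

lemma small_of_skey {f : ℕ → LShape} {i k q : ℕ} (h : skey f i = some (k, q)) :
    kind (f i) = .small k ∧ slot f i = q := by
  unfold skey at h
  rcases hk : kind (f i) with _ | _ | z | k' <;> rw [hk] at h <;> simp at h
  exact ⟨by rw [h.1], h.2⟩

lemma place_disjoint {f : ℕ → LShape} (hf : ∀ i, SymL (f i)) (i j : ℕ) (hij : i ≠ j)
    (hb : (place f i).1 = (place f j).1) :
    Disjoint (interior (planeTranslate (place f i).2 (f i).toSet))
      (interior (planeTranslate (place f j).2 (f j).toSet)) := by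
  rcases hki : kind (f i) with _ | _ | z | k
  · rw [interior_zero (hf i) (kind_zero (hf i) hki)]
    exact disjoint_bot_left
  · rcases hkj : kind (f j) with _ | _ | z' | k' <;> simp only [place, hki, hkj] at hb ⊢ <;>
      try omega
    have hi := wA_lt_wB hki
    have hj := wA_lt_wB hkj
    have c1 := (ktCol_spec (wA f) (wB f) i).1
    have c2 := (ktCol_spec (wA f) (wB f) j).1
    obtain ⟨-, -, -, l1, -⟩ := kt_witness _ _ i hi
    obtain ⟨-, -, -, l2, -⟩ := kt_witness _ _ j hj
    have hd := kt_disjoint _ _ i j hij hi hj (by omega) (by omega)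
    have e : ∀ x, kind (f x) = .wide → wA f x + (f x).wx ≤ wB f x := by
      intro x hx
      rw [wA, wB, if_pos hx, if_pos hx]
      linarith [min_le_right (1 - (f x).lx) (f x).wx]
    have ei := e i hki
    have ej := e j hkj
    rcases hd with h | h
    · exact disjoint_diag (hf i) (hf j) (by dsimp only; linarith) (by dsimp only; linarith)
    · exact (disjoint_diag (hf j) (hf i) (by dsimp only; linarith) (by dsimp only; linarith)).symm
  · rcases hkj : kind (f j) with _ | _ | z' | k' <;> simp only [place, hki, hkj] at hb ⊢ <;>
      try omega
    have oi := offs_nonneg hf i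
    have oj := offs_nonneg hf j
    have ui := offs_lt f i
    have uj := offs_lt f j
    rw [hki, cap] at ui
    rw [hkj, cap] at uj
    have ni := kind_narrow hki
    have nj := kind_narrow hkj
    rcases lt_trichotomy z z' with h | h | h
    · have : (1 / 3 : ℝ) ^ z' ≤ (1 / 3) ^ (z + 1) :=
        pow_le_pow_of_le_one (by norm_num) (by norm_num) h
      rw [pow_succ] at this
      exact (disjoint_diag (hf j) (hf i) (by dsimp only; linarith) (by dsimp only; linarith)).symm
    · subst h
      rcases offs_sep hf hij (hki.trans hkj.symm) (by omega) with h | h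
      · exact disjoint_diag (hf i) (hf j) (by dsimp only; linarith) (by dsimp only; linarith)
      · exact (disjoint_diag (hf j) (hf i) (by dsimp only; linarith) (by dsimp only; linarith)).symm
    · have : (1 / 3 : ℝ) ^ z ≤ (1 / 3) ^ (z' + 1) :=
        pow_le_pow_of_le_one (by norm_num) (by norm_num) h
      rw [pow_succ] at this
      exact disjoint_diag (hf i) (hf j) (by dsimp only; linarith) (by dsimp only; linarith)
  · rcases hkj : kind (f j) with _ | _ | z' | k' <;> simp only [place, hki, hkj] at hb ⊢ <;>
      try omega
    have si := skey_small hki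
    have sj := skey_small hkj
    by_cases hs : skey f i = skey f j
    · have ha := alloc_key _ i j hs
      rw [si, sj] at hs
      simp only [Option.some.injEq, Prod.mk.injEq] at hs
      obtain ⟨rfl, hs⟩ := hs
      rw [ha]
      rcases offs_sep hf hij (hki.trans hkj.symm) hs with h | h
      · exact disjoint_diag (hf i) (hf j) (by dsimp only; linarith) (by dsimp only; linarith)
      · exact (disjoint_diag (hf j) (hf i) (by dsimp only; linarith) (by dsimp only; linarith)).symm
    · have hc := alloc_not_comp _ i j _ _ _ _ si sj hs
      have hsep := cell_sep _ _ _ _ hc (by omega)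
      have oi := offs_nonneg hf i
      have oj := offs_nonneg hf j
      have ui := offs_lt f i
      have uj := offs_lt f j
      rw [hki, cap] at ui
      rw [hkj, cap] at uj
      have li := kind_small (hf i) hki
      have lj := kind_small (hf j) hkj
      have h3 : ∀ k : ℕ, (1 / 2 : ℝ) ^ k = 2 * (1 / 2) ^ (k + 1) := by
        intro k; rw [pow_succ]; ring
      have h3i := h3 k
      have h3j := h3 k'
      rcases hsep with h | h | h | h
      · refine disjoint_of_fst (c := cellX k' (alloc (skey f) j)) (fun p hp => ?_) (fun p hp => ?_)
        · have := (hf i).mem_box hp; dsimp only at this; linarith [this.2.1]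
        · have := (hf j).mem_box hp; dsimp only at this; linarith [this.1]
      · refine (disjoint_of_fst (c := cellX k (alloc (skey f) i)) (fun p hp => ?_)
          (fun p hp => ?_)).symm
        · have := (hf j).mem_box hp; dsimp only at this; linarith [this.2.1]
        · have := (hf i).mem_box hp; dsimp only at this; linarith [this.1]
      · refine disjoint_of_snd (c := cellY k' (alloc (skey f) j)) (fun p hp => ?_) (fun p hp => ?_)
        · have := (hf i).mem_box hp; dsimp only at this; linarith [this.2.2.2]
        · have := (hf j).mem_box hp; dsimp only at this; linarith [this.2.2.1]
      · refine (disjoint_of_snd (c := cellY k (alloc (skey f) i)) (fun p hp => ?_)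
          (fun p hp => ?_)).symm
        · have := (hf j).mem_box hp; dsimp only at this; linarith [this.2.2.2]
        · have := (hf i).mem_box hp; dsimp only at this; linarith [this.2.2.1]

/-! ### Counting the bins -/

lemma wide_bound {f : ℕ → LShape} (hf : ∀ i, SymL (f i)) {N m : ℕ} {bin : ℕ → ℕ} {v : ℕ → ℝ × ℝ}
    (P : Packing f N m bin v) {i : ℕ} (hi : i < N) (hk : kind (f i) = .wide) :
    3 * (ktLev (wA f) (wB f) i - 1) + ktCol (wA f) (wB f) i < 18 * m := by
  classical
  have key : ∀ p, ((Finset.range N).filter (fun j => wA f j ≤ p ∧ p < wB f j)).card ≤ 6 * m := by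
    intro p
    have hw : ∀ j ∈ (Finset.range N).filter (fun j => wA f j ≤ p ∧ p < wB f j),
        kind (f j) = .wide := by
      intro j hj
      by_contra hne
      have h := (Finset.mem_filter.1 hj).2
      rw [wA, wB, if_neg hne, if_neg hne] at h
      linarith [h.1, h.2]
    refine wide_card hf P _ (fun j hj => ?_) (fun j hj => ?_) (fun j hj => ?_) p (fun j hj => ?_)
    · exact Finset.mem_range.1 (Finset.mem_filter.1 hj).1
    · exact (kind_wide (hw j hj)).2.1
    · exact (kind_wide (hw j hj)).2.2
    · have h := (Finset.mem_filter.1 hj).2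
      rwa [wA, wB, if_pos (hw j hj), if_pos (hw j hj)] at h
  have h1 := ktLev_le (wA f) (wB f) N (6 * m) (fun p => by convert key p) i hi (wA_lt_wB hk)
  have h2 := (ktCol_spec (wA f) (wB f) i).1
  omega

open Classical in
/-- The total width of the items of type `κ` among the first `N`. -/
noncomputable def classWidth (f : ℕ → LShape) (N : ℕ) (κ : Kind) : ℝ :=
  ∑ j ∈ (Finset.range N).filter (fun j => kind (f j) = κ), (f j).wx

lemma psum_le {f : ℕ → LShape} (hf : ∀ i, SymL (f i)) {N i : ℕ} (hi : i < N) :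
    psum f i ≤ classWidth f N (kind (f i)) := by
  classical
  unfold psum classWidth
  apply Finset.sum_le_sum_of_subset_of_nonneg
  · intro x hx
    simp only [Finset.mem_filter, Finset.mem_range] at hx ⊢
    exact ⟨by omega, hx.2⟩
  · exact fun x _ _ => (hf x).w_nonneg

lemma slot_mul_le {f : ℕ → LShape} (hf : ∀ i, SymL (f i)) {N i : ℕ} (hi : i < N) :
    slot f i * cap (kind (f i)) ≤ classWidth f N (kind (f i)) := by
  have h1 := offs_nonneg hf i
  have h2 := psum_le hf hi
  rw [offs] at h1
  linarith

lemma narrow_bound {f : ℕ → LShape} (hf : ∀ i, SymL (f i)) {N m : ℕ} {bin : ℕ → ℕ}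
    {v : ℕ → ℝ × ℝ} (P : Packing f N m bin v) {i z : ℕ} (hi : i < N)
    (hk : kind (f i) = .narrow z) : slot f i < 12 * m + 1 := by
  classical
  have h1 := slot_mul_le hf hi
  have hp : (0 : ℝ) < (1 / 3) ^ z := by positivity
  have h2 : classWidth f N (.narrow z) ≤ m * (4 * (1 / 3) ^ z) := by
    refine class_sum hf P _ (fun j hj => ?_) (fun j hj => ?_) _ (by positivity) (fun j hj => ?_)
    · exact Finset.mem_range.1 (Finset.mem_filter.1 hj).1
    · exact (kind_narrow (Finset.mem_filter.1 hj).2).1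
    · have := kind_narrow (Finset.mem_filter.1 hj).2
      linarith
  rw [hk, cap] at h1
  have h3 : (slot f i : ℝ) * ((1 / 3) ^ z / 3) ≤ (12 * m) * ((1 / 3) ^ z / 3) := by linarith
  have h4 : (slot f i : ℝ) ≤ 12 * m := le_of_mul_le_mul_right h3 (by positivity)
  have h5 : slot f i ≤ 12 * m := by exact_mod_cast h4
  omega

open Classical in
/-- The cells, as pairs of a level and a number, allocated to the small items among the first `N`. -/
noncomputable def cells (f : ℕ → LShape) (N : ℕ) : Finset (ℕ × ℕ) :=
  ((Finset.range N).filter (fun i => ∃ k, kind (f i) = .small k)).image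
    (fun i => (((skey f i).getD (0, 0)).1, alloc (skey f) i))

lemma mem_cells {f : ℕ → LShape} {N : ℕ} {c : ℕ × ℕ} :
    c ∈ cells f N ↔ ∃ i < N, kind (f i) = .small c.1 ∧ alloc (skey f) i = c.2 := by
  classical
  unfold cells
  simp only [Finset.mem_image, Finset.mem_filter, Finset.mem_range]
  constructor
  · rintro ⟨i, ⟨hi, k, hk⟩, rfl⟩
    refine ⟨i, hi, ?_, rfl⟩
    rw [skey_small hk]
    exact hk
  · rintro ⟨i, hi, hk, ha⟩
    refine ⟨i, ⟨hi, _, hk⟩, ?_⟩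
    rw [skey_small hk, ha]
    rfl

/-- Every cell of a class but the last one is filled up to `cap`, so the number of cells is bounded
by the total width. -/
lemma level_card {f : ℕ → LShape} (hf : ∀ i, SymL (f i)) (N j : ℕ) :
    (((cells f N).filter (fun c => c.1 = j)).card : ℝ) ≤
      classWidth f N (.small j) / (1 / 2) ^ (j + 1) + 1 := by
  classical
  have hp : (0 : ℝ) < (1 / 2) ^ (j + 1) := by positivity
  have h0 : 0 ≤ classWidth f N (.small j) := Finset.sum_nonneg fun x _ => (hf x).w_nonneg
  set S := classWidth f N (.small j) / (1 / 2) ^ (j + 1) with hS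
  have hS0 : 0 ≤ S := div_nonneg h0 hp.le
  have hsub : (cells f N).filter (fun c => c.1 = j) ⊆ (Finset.range (⌊S⌋₊ + 1)).image
      (fun q => (j, alloc (skey f) (sInf {x | skey f x = some (j, q)}))) := by
    intro c hc
    obtain ⟨hc, hj⟩ := Finset.mem_filter.1 hc
    obtain ⟨i, hi, hk, ha⟩ := mem_cells.1 hc
    rw [hj] at hk
    refine Finset.mem_image.2 ⟨slot f i, ?_, ?_⟩
    · have h1 := slot_mul_le hf hi
      rw [hk, cap, ← le_div_iff₀ hp, ← hS] at h1
      exact Finset.mem_range.2 (Nat.lt_succ_of_le (Nat.le_floor h1))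
    · rw [← skey_small hk, ← alloc_first, ha, ← hj]
  have h1 := (Finset.card_le_card hsub).trans Finset.card_image_le
  rw [Finset.card_range] at h1
  have h2 : (((cells f N).filter (fun c => c.1 = j)).card : ℝ) ≤ ⌊S⌋₊ + 1 := by exact_mod_cast h1
  linarith [Nat.floor_le hS0]

lemma geom_quarter (M : ℕ) : ∑ j ∈ Finset.range M, (1 / 4 : ℝ) ^ j ≤ 4 / 3 := by
  have h : ∑ j ∈ Finset.range M, (1 / 4 : ℝ) ^ j = 4 / 3 - 4 / 3 * (1 / 4) ^ M := by
    induction M with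
    | zero => simp
    | succ M ih => rw [Finset.sum_range_succ, ih, pow_succ]; ring
  have : (0 : ℝ) < (1 / 4) ^ M := by positivity
  linarith

/-- An item of level `j` has `ℓ > 2⁻ʲ/4`, so the width counted by `level_card` is paid for by area. -/
lemma small_area {f : ℕ → LShape} (hf : ∀ i, SymL (f i)) {N m : ℕ} {bin : ℕ → ℕ} {v : ℕ → ℝ × ℝ}
    (P : Packing f N m bin v) (M : ℕ) :
    ∑ j ∈ Finset.range M, 4 * (1 / 2) ^ (j + 1) * classWidth f N (.small j) ≤ 8 * m := by
  classical
  have h1 : ∀ j ∈ Finset.range M, 4 * (1 / 2) ^ (j + 1) * classWidth f N (.small j) ≤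
      ∑ i ∈ (Finset.range N).filter (fun i => kind (f i) = .small j),
        8 * ((f i).lx * (f i).wx) := by
    intro j _
    unfold classWidth
    rw [Finset.mul_sum]
    refine Finset.sum_le_sum fun i hi => ?_
    have h := (kind_small (hf i) (Finset.mem_filter.1 hi).2).1
    rw [pow_succ] at h
    have := mul_le_mul_of_nonneg_right h.le (hf i).w_nonneg
    linarith
  refine (Finset.sum_le_sum h1).trans ?_
  rw [← Finset.sum_biUnion]
  · have h2 := area_sum hf P
    refine le_trans (Finset.sum_le_sum_of_subset_of_nonneg (t := Finset.range N) ?_ ?_) ?_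
    · intro i hi
      simp only [Finset.mem_biUnion, Finset.mem_filter] at hi
      obtain ⟨_, _, h, _⟩ := hi
      exact h
    · intro i _ _
      have := (hf i).w_nonneg
      have := (hf i).w_le
      have : 0 ≤ (f i).lx := by linarith
      positivity
    · rw [← Finset.mul_sum]
      linarith
  · intro a _ b _ hab
    refine Finset.disjoint_left.2 fun i hi hi' => hab ?_
    have := (Finset.mem_filter.1 hi).2.symm.trans (Finset.mem_filter.1 hi').2
    exact Kind.small.inj this

lemma small_bound {f : ℕ → LShape} (hf : ∀ i, SymL (f i)) {N m : ℕ} {bin : ℕ → ℕ} {v : ℕ → ℝ × ℝ}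
    (P : Packing f N m bin v) : (touched (cells f N) 0).card ≤ 8 * m + 2 := by
  classical
  obtain ⟨M, hM⟩ : ∃ M, ∀ c ∈ cells f N, c.1 < M :=
    ⟨(cells f N).sup Prod.fst + 1, fun c hc => Nat.lt_succ_of_le (Finset.le_sup (f := Prod.fst) hc)⟩
  have h1 := touched_bound (cells f N) ?_ ?_ M hM
  · have h2 : ∑ j ∈ Finset.range M,
        (((cells f N).filter (fun c => c.1 = j)).card : ℝ) * (1 / 4) ^ j ≤
        ∑ j ∈ Finset.range M,
          (4 * (1 / 2) ^ (j + 1) * classWidth f N (.small j) + (1 / 4 : ℝ) ^ j) := by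
      refine Finset.sum_le_sum fun j _ => ?_
      have hp : (0 : ℝ) < (1 / 2) ^ (j + 1) := by positivity
      have h4 : (1 / 4 : ℝ) ^ j = 4 * (1 / 2) ^ (j + 1) * (1 / 2) ^ (j + 1) := by
        rw [pow_succ, show (1 / 4 : ℝ) = 1 / 2 * (1 / 2) by norm_num, mul_pow]; ring
      refine (mul_le_mul_of_nonneg_right (level_card hf N j) (by positivity)).trans (le_of_eq ?_)
      rw [add_mul, one_mul]
      congr 1
      rw [h4]
      field_simp
    rw [Finset.sum_add_distrib] at h2
    have h3 := small_area hf P M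
    have h4 := geom_quarter M
    have h5 : ((touched (cells f N) 0).card : ℝ) < 8 * m + 3 := by linarith
    have h6 : (touched (cells f N) 0).card < 8 * m + 3 := by exact_mod_cast h5
    omega
  · intro c hc c' hc' hne
    obtain ⟨i, hi, hk, ha⟩ := mem_cells.1 hc
    obtain ⟨i', hi', hk', ha'⟩ := mem_cells.1 hc'
    rw [← ha, ← ha']
    refine alloc_not_comp _ i i' _ _ _ _ (skey_small hk) (skey_small hk') fun h => hne ?_
    have h2 := alloc_key _ i i' h
    rw [skey_small hk, skey_small hk'] at h
    simp only [Option.some.injEq, Prod.mk.injEq] at h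
    exact Prod.ext h.1 (by rw [← ha, ← ha', h2])
  · intro c hc n hn
    obtain ⟨i, hi, hk, ha⟩ := mem_cells.1 hc
    rw [← ha] at hn
    obtain ⟨j, hj, K, Q, hkj, hcomp⟩ := alloc_leftmost _ i _ _ (skey_small hk) n hn
    exact ⟨(K, alloc (skey f) j), mem_cells.2 ⟨j, by omega, (small_of_skey hkj).1, rfl⟩, hcomp⟩

lemma bins_bound {f : ℕ → LShape} (hf : ∀ i, SymL (f i)) {N m : ℕ} {bin : ℕ → ℕ} {v : ℕ → ℝ × ℝ}
    (P : Packing f N m bin v) :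
    ((Finset.range N).image (fun i => (place f i).1)).card ≤ 38 * m + 4 := by
  classical
  have hsub : (Finset.range N).image (fun i => (place f i).1) ⊆
      ({0} ∪ (Finset.range (18 * m)).image (fun c => 4 * c + 1)) ∪
      ((Finset.range (12 * m + 1)).image (fun c => 4 * c + 2) ∪
        (touched (cells f N) 0).image (fun c => 4 * c + 3)) := by
    intro b hb
    obtain ⟨i, hi, rfl⟩ := Finset.mem_image.1 hb
    rw [Finset.mem_range] at hi
    rcases hk : kind (f i) with _ | _ | z | k
    · refine Finset.mem_union_left _ (Finset.mem_union_left _ ?_)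
      simp [place, hk]
    · refine Finset.mem_union_left _ (Finset.mem_union_right _ ?_)
      refine Finset.mem_image.2 ⟨_, Finset.mem_range.2 (wide_bound hf P hi hk), ?_⟩
      simp [place, hk]
    · refine Finset.mem_union_right _ (Finset.mem_union_left _ ?_)
      refine Finset.mem_image.2 ⟨_, Finset.mem_range.2 (narrow_bound hf P hi hk), ?_⟩
      simp [place, hk]
    · refine Finset.mem_union_right _ (Finset.mem_union_right _ ?_)
      refine Finset.mem_image.2 ⟨alloc (skey f) i / 4 ^ k, ?_, by simp [place, hk]⟩
      refine Finset.mem_image.2 ⟨(k, alloc (skey f) i), ?_, by simp⟩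
      exact Finset.mem_filter.2 ⟨mem_cells.2 ⟨i, hi, hk, rfl⟩, Nat.zero_le _⟩
  refine (Finset.card_le_card hsub).trans ?_
  have a1 := Finset.card_union_le
    ({0} ∪ (Finset.range (18 * m)).image (fun c => 4 * c + 1))
    ((Finset.range (12 * m + 1)).image (fun c => 4 * c + 2) ∪
        (touched (cells f N) 0).image (fun c => 4 * c + 3))
  have a2 := Finset.card_union_le {0} ((Finset.range (18 * m)).image (fun c => 4 * c + 1))
  have a3 := Finset.card_union_le ((Finset.range (12 * m + 1)).image (fun c => 4 * c + 2))
    ((touched (cells f N) 0).image (fun c => 4 * c + 3))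
  have b1 := Finset.card_image_le (s := Finset.range (18 * m)) (f := fun c => 4 * c + 1)
  have b2 := Finset.card_image_le (s := Finset.range (12 * m + 1)) (f := fun c => 4 * c + 2)
  have b3 := Finset.card_image_le (s := touched (cells f N) 0) (f := fun c => 4 * c + 3)
  have b4 := small_bound hf P
  rw [Finset.card_range] at b1 b2
  rw [Finset.card_singleton] at a2
  omega

/-! ### The algorithm on lists -/

/-- The items of `l` as a sequence, continued by points. -/
noncomputable def seqOf (l : List LShape) (n : ℕ) : LShape := l.getD n ⟨0, 0, 0, 0⟩

/-- The placement of the last item of `l`. -/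
noncomputable def algo (l : List LShape) : ℕ × ℝ × ℝ := place (seqOf l) (l.length - 1)

lemma seqOf_get (l : List LShape) (i : Fin l.length) : seqOf l i = l.get i := by
  simp [seqOf]

lemma seqOf_symL {l : List LShape} (h : ∀ L ∈ l, SymL L) (n : ℕ) : SymL (seqOf l n) := by
  by_cases hn : n < l.length
  · rw [seqOf_get l ⟨n, hn⟩]
    exact h _ (List.get_mem _ _)
  · rw [seqOf, List.getD_eq_default _ _ (not_lt.1 hn)]
    simp [SymL, LShape.IsValid]

lemma placeOf_algo (l : List LShape) (i : Fin l.length) :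
    placeOf algo l i = place (seqOf l) i := by
  have hlen : (l.take (i.1 + 1)).length - 1 = i := by
    rw [List.length_take]; omega
  rw [placeOf, algo, hlen]
  refine place_congr _ _ _ fun j hj => ?_
  have hj' : j < i.1 + 1 := by omega
  rw [seqOf, seqOf, List.getD_eq_getElem?_getD, List.getD_eq_getElem?_getD, List.getElem?_take,
    if_pos hj']

lemma offPacks_opt {l : List LShape} (h : ∀ L ∈ l, SymL L) : OffPacks l (OPT l) := by
  refine Nat.sInf_mem (s := {m | OffPacks l m}) ⟨l.length, fun i => i, fun _ => 0, fun i => i.2,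
    fun i => ?_, fun i j hij hb => (hij (Fin.ext hb)).elim⟩
  have hi := h _ (List.get_mem l i)
  have hl := hi.l_le
  apply subset_unitBin hi <;> simp only [Prod.fst_zero, Prod.snd_zero] <;> linarith

lemma packing_opt {l : List LShape} (h : ∀ L ∈ l, SymL L) :
    ∃ bin v, Packing (seqOf l) l.length (OPT l) bin v := by
  obtain ⟨bin, v, h1, h2, h3⟩ := offPacks_opt h
  refine ⟨fun i => if hi : i < l.length then bin ⟨i, hi⟩ else 0,
    fun i => if hi : i < l.length then v ⟨i, hi⟩ else 0, fun i hi => ?_, fun i hi => ?_,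
    fun i hi j hj hij hb => ?_⟩
  · simpa only [dif_pos hi] using h1 ⟨i, hi⟩
  · simpa only [dif_pos hi, seqOf_get l ⟨i, hi⟩] using h2 ⟨i, hi⟩
  · simp only [dif_pos hi, dif_pos hj] at hb
    simpa only [dif_pos hi, dif_pos hj, seqOf_get l ⟨i, hi⟩, seqOf_get l ⟨j, hj⟩] using
      h3 ⟨i, hi⟩ ⟨j, hj⟩ (by simpa using hij) hb

/-- there is a deterministic online bin-packing algorithm that, on every input
sequence of symmetric L-shapes (`ℓx = ℓy` and `wx = wy`), produces a valid packing using at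
most `41·OPT + 9` bins. -/
theorem stmt8 :
    ∃ A : List LShape → ℕ × ℝ × ℝ,
      ∀ l : List LShape,
        (∀ L ∈ l, L.IsValid ∧ L.lx = L.ly ∧ L.wx = L.wy) →
        OnlinePacks A l ∧ binsUsed A l ≤ 41 * OPT l + 9 := by
  refine ⟨algo, fun l h => ⟨⟨fun i => ?_, fun i j hij hb => ?_⟩, ?_⟩⟩
  · rw [placeOf_algo, ← seqOf_get]
    exact place_sub (seqOf_symL h) i
  · rw [placeOf_algo, placeOf_algo] at hb
    rw [placeOf_algo, placeOf_algo, ← seqOf_get, ← seqOf_get]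
    exact place_disjoint (seqOf_symL h) i j (fun e => hij (Fin.ext e)) hb
  · obtain ⟨bin, v, P⟩ := packing_opt h
    have h1 := bins_bound (seqOf_symL h) P
    refine le_trans (le_trans (Finset.card_le_card ?_) h1) (by omega)
    intro b hb
    obtain ⟨i, -, rfl⟩ := Finset.mem_image.1 hb
    exact Finset.mem_image.2 ⟨i, Finset.mem_range.2 i.2, by rw [placeOf_algo]⟩
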